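/- For every integer n ≥ 3, f(n,0) = n·Σ_{i=1}^{n−1} binom(n−1, i)·(−1)^{i−1}·f(n−i−1, i), where f(C,D) = [s_{(2^C,1^D)}] X_{GN_{C+D,C}} for C, D ≥ 0 and (2^a,1^b) denotes the partition with a parts equal to 2 followed by b parts equal to 1. -/

import Mathlib

open scoped Classical

/-! ### Cells and Young diagrams -/

/-- A cell of a Young diagram: `(row, column)`, both 0-indexed, rows from the top. -/
abbrev Cell : Type := ℕ × ℕ

/-- The length of row `i` (0-indexed from the top) of the Young diagram of the
partition `lam`, whose parts are arranged in weakly decreasing order. -/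
def rowLen {N : ℕ} (lam : Nat.Partition N) (i : ℕ) : ℕ :=
  ((lam.parts.sort (· ≤ ·)).reverse).getD i 0

/-- The Young diagram of a partition, as a set of cells. -/
def diag {N : ℕ} (lam : Nat.Partition N) : Set Cell :=
  {c : Cell | c.2 < rowLen lam c.1}

/-- The number of rows (the length) of a partition. -/
def numRows {N : ℕ} (lam : Nat.Partition N) : ℕ := Multiset.card lam.parts

/-! ### Chromatic symmetric functions and Schur functions, as monomial-coefficient
functions.  A formal power series of bounded degree in the commuting variables
`x_0, x_1, x_2, …` is recorded by the map sending an exponent vector `μ : ℕ → ℕ`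
(only finitely many nonzero entries ever matter) to the coefficient of the monomial
`∏ i, x_i ^ μ i`.  Colors / tableau entries are positive integers, so the variable
`x_0` is never used. -/

/-- A proper coloring of `G` by positive integers. -/
def IsProperColoring {V : Type*} (G : SimpleGraph V) (f : V → ℕ) : Prop :=
  (∀ v, 0 < f v) ∧ ∀ u v, G.Adj u v → f u ≠ f v

/-- The coefficient of the monomial `∏ i, x_i ^ μ i` in the chromatic symmetric
function `X_G = ∑_{proper colorings f} ∏_{v} x_{f v}`. -/
noncomputable def XCoeff {V : Type*} [Fintype V] (G : SimpleGraph V) (μ : ℕ → ℕ) : ℚ :=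
  Nat.card {f : V → ℕ //
    IsProperColoring G f ∧ ∀ i, Nat.card {v : V // f v = i} = μ i}

/-- A semistandard Young tableau of shape `lam`: positive entries on the diagram
(normalized to `0` off the diagram), weakly increasing along rows, strictly
increasing down columns. -/
def IsSSYT {N : ℕ} (lam : Nat.Partition N) (t : Cell → ℕ) : Prop :=
  (∀ c, c ∉ diag lam → t c = 0) ∧ (∀ c ∈ diag lam, 0 < t c) ∧
  (∀ i j : ℕ, ((i, j + 1) : Cell) ∈ diag lam → t (i, j) ≤ t (i, j + 1)) ∧
  (∀ i j : ℕ, ((i + 1, j) : Cell) ∈ diag lam → t (i, j) < t (i + 1, j))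

/-- The coefficient of the monomial `∏ i, x_i ^ μ i` in the Schur function `s_lam`,
i.e. the number of SSYT of shape `lam` and weight `μ`. -/
noncomputable def schurFn {N : ℕ} (lam : Nat.Partition N) (μ : ℕ → ℕ) : ℚ :=
  Nat.card {t : Cell → ℕ // IsSSYT lam t ∧
    ∀ i, Nat.card {c : Cell // c ∈ diag lam ∧ t c = i} = μ i}

/-- The coefficient `[s_lam] f` of the Schur function `s_lam` in the (unique, when it
exists) expansion `f = ∑_{ν ⊢ N} c_ν s_ν` of a symmetric function `f`, homogeneous of
degree `N`, given by its monomial coefficients. -/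
noncomputable def sCoeff {N : ℕ} (f : (ℕ → ℕ) → ℚ) (lam : Nat.Partition N) : ℚ :=
  if h : ∃ c : Nat.Partition N →₀ ℚ, ∀ μ, f μ = c.sum fun ν a => a * schurFn ν μ
  then h.choose lam else 0

/-! ### Graphs: generalized nets, generalized spiders, disjoint unions -/

/-- The generalized net `GN_{n,m}`: the complete graph on the body `Fin n`, with a
pendant (`Sum.inr j`) attached to the anchor `Sum.inl j` for each `j : Fin m`. -/
def genNet (n m : ℕ) : SimpleGraph (Fin n ⊕ Fin m) :=
  SimpleGraph.fromRel fun a b =>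
    match a, b with
    | Sum.inl _, Sum.inl _ => True
    | Sum.inl i, Sum.inr j => (i : ℕ) = (j : ℕ)
    | Sum.inr _, _ => False

/-- The generalized spider `GS_{n,(2,1^{m-1})}`: the complete graph on the body
`Fin n`, a pendant `Sum.inr (Sum.inl j)` attached to the body vertex `Sum.inl j` for
each `j : Fin m`, and one extra vertex `Sum.inr (Sum.inr 0)` (the special pendant)
attached to the pendant `Sum.inr (Sum.inl 0)`, so that the body vertex `0` (the
special anchor) carries an attached path on two vertices. -/
def genSpider2 (n m : ℕ) : SimpleGraph (Fin n ⊕ (Fin m ⊕ Fin 1)) :=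
  SimpleGraph.fromRel fun a b =>
    match a, b with
    | Sum.inl _, Sum.inl _ => True
    | Sum.inl i, Sum.inr (Sum.inl j) => (i : ℕ) = (j : ℕ)
    | Sum.inr (Sum.inl j), Sum.inr (Sum.inr _) => (j : ℕ) = 0
    | _, _ => False

/-- Disjoint union of two simple graphs. -/
def disjUnion {α β : Type*} (G : SimpleGraph α) (H : SimpleGraph β) :
    SimpleGraph (α ⊕ β) :=
  SimpleGraph.fromRel fun a b =>
    match a, b with
    | Sum.inl a, Sum.inl b => G.Adj a b
    | Sum.inr a, Sum.inr b => H.Adj a b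
    | _, _ => False

/-- The one-vertex graph `K_1`. -/
def K1 : SimpleGraph (Fin 1) := ⊥

/-- The path (= complete graph) on two vertices `P_2`. -/
def P2 : SimpleGraph (Fin 2) := ⊤

/-! ### Operations on partitions -/

/-- `removeOnes lam t` is the partition `lam ∖ 1^t` obtained by deleting `t` parts
equal to `1` from `lam` (junk value if `lam` has fewer than `t` parts equal to `1`). -/
def removeOnes {N : ℕ} (lam : Nat.Partition N) (t : ℕ) : Nat.Partition (N - t) :=
  if h : Multiset.replicate t 1 ≤ lam.parts then
    { parts := lam.parts - Multiset.replicate t 1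
      parts_pos := fun hx =>
        lam.parts_pos (Multiset.mem_of_le (tsub_le_self) hx)
      parts_sum := by
        have h1 : (lam.parts - Multiset.replicate t 1) + Multiset.replicate t 1
            = lam.parts := tsub_add_cancel_of_le h
        have h2 := congrArg Multiset.sum h1
        rw [Multiset.sum_add, Multiset.sum_replicate, lam.parts_sum] at h2
        simp only [smul_eq_mul, mul_one] at h2
        omega }
  else Nat.Partition.indiscrete (N - t)

/-- The partition `(2^a, 1^b)` of `2*a + b`. -/
def twoOne (a b : ℕ) : Nat.Partition (2 * a + b) where
  parts := Multiset.replicate a 2 + Multiset.replicate b 1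
  parts_pos := by
    intro i hi
    rw [Multiset.mem_add] at hi
    rcases hi with hi | hi <;> · rw [Multiset.eq_of_mem_replicate hi]; omega
  parts_sum := by
    rw [Multiset.sum_add, Multiset.sum_replicate, Multiset.sum_replicate]
    simp only [smul_eq_mul, mul_one]
    omega

/-! ### Special rim hook `G`-tabloids -/

/-- Two cells are adjacent if they share an edge. -/
def cellAdj (c d : Cell) : Prop :=
  (c.1 = d.1 ∧ (c.2 + 1 = d.2 ∨ d.2 + 1 = c.2)) ∨
  (c.2 = d.2 ∧ (c.1 + 1 = d.1 ∨ d.1 + 1 = c.1))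

/-- A set of cells is (the diagram of) a Young diagram if it is closed under
decreasing either coordinate. -/
def IsYoungDiag (D : Set Cell) : Prop :=
  ∀ i j i' j' : ℕ, ((i, j) : Cell) ∈ D → i' ≤ i → j' ≤ j → ((i', j') : Cell) ∈ D

/-- A set of cells is connected (via edge-adjacency, within the set). -/
def CellConnected (S : Set Cell) : Prop :=
  ∀ c ∈ S, ∀ d ∈ S, Relation.ReflTransGen (fun a b => a ∈ S ∧ b ∈ S ∧ cellAdj a b) c d

/-- A border strip (= rim hook, as a set of cells): nonempty, connected, and
containing no 2×2 square of cells. -/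
def IsBorderStrip (H : Set Cell) : Prop :=
  H.Nonempty ∧ CellConnected H ∧
    ∀ i j : ℕ, ¬(((i, j) : Cell) ∈ H ∧ ((i + 1, j) : Cell) ∈ H ∧
      ((i, j + 1) : Cell) ∈ H ∧ ((i + 1, j + 1) : Cell) ∈ H)

/-- `H` is a rim hook of the Young diagram `D`: a border strip contained in `D`
whose removal leaves a Young diagram. -/
def IsRimHookOf (D H : Set Cell) : Prop :=
  H ⊆ D ∧ IsBorderStrip H ∧ IsYoungDiag (D \ H)

/-- `IsRemovalSeq L D` says that the sets of cells in the list `L` may be removed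
successively from the diagram `D`, each being a rim hook of what remains, with
nothing left at the end. -/
def IsRemovalSeq : List (Set Cell) → Set Cell → Prop
  | [], D => D = ∅
  | H :: L, D => IsRimHookOf D H ∧ IsRemovalSeq L (D \ H)

/-- A special rim hook `G`-tabloid of shape `lam`, with respect to an order `r` on
the vertices of `G`: the cells of the diagram of `lam` are filled bijectively with
the vertices of `G` (vertex `v` goes in cell `pos v`), and the diagram is tiled by
rim hooks, successively removable, each meeting the first column.  The rim hooks are
recorded by the labelling `hk`, which assigns to each vertex the topmost row in which
its rim hook meets the first column.  The vertices in each rim hook form a stable set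
of `G` and, read from the rim hook's (bottom) cell in the first column — i.e. in
increasing order of the diagonal index `column − row` — they increase with respect
to `r`. -/
structure SRHGTabloid {V : Type*} (G : SimpleGraph V) (r : V → V → Prop)
    {N : ℕ} (lam : Nat.Partition N) where
  /-- the cell occupied by each vertex -/
  pos : V → Cell
  /-- the label of the rim hook containing each vertex: the topmost row in which
  that rim hook meets the first column -/
  hk : V → ℕ
  pos_inj : Function.Injective pos
  pos_range : Set.range pos = diag lam
  hk_mem : ∀ v, ((hk v, 0) : Cell) ∈ pos '' {u | hk u = hk v}
  hk_min : ∀ v i, ((i, 0) : Cell) ∈ pos '' {u | hk u = hk v} → hk v ≤ i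
  removal : ∃ L : List ℕ, L.Nodup ∧ (∀ i, i ∈ L ↔ ∃ v, hk v = i) ∧
    IsRemovalSeq (L.map fun i => pos '' {u | hk u = i}) (diag lam)
  stable : ∀ u v, hk u = hk v → u ≠ v → ¬G.Adj u v
  increasing : ∀ u v, hk u = hk v →
    ((pos u).2 : ℤ) - ((pos u).1 : ℤ) < ((pos v).2 : ℤ) - ((pos v).1 : ℤ) → r u v

/-- The sign of a special rim hook `G`-tabloid: `(-1)` to the total number of north
steps, where a rim hook spanning `k` rows contributes `k - 1` north steps. -/
noncomputable def tabSign {V : Type*} {G : SimpleGraph V} {r : V → V → Prop}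
    {N : ℕ} {lam : Nat.Partition N} (T : SRHGTabloid G r lam) : ℤ :=
  (-1) ^ ∑ i ∈ Finset.range N,
    ({a : ℕ | ∃ v, T.hk v = i ∧ (T.pos v).1 = a}.ncard - 1)

/-- The cells of the head of a tabloid of shape `lam`: the rows of length `≥ 2`. -/
def headCells {N : ℕ} (lam : Nat.Partition N) : Set Cell :=
  {c : Cell | c ∈ diag lam ∧ 2 ≤ rowLen lam c.1}

/-- The cells of the tail of a tabloid of shape `lam`: the rows of length `1`. -/
def tailCells {N : ℕ} (lam : Nat.Partition N) : Set Cell :=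
  {c : Cell | c ∈ diag lam ∧ rowLen lam c.1 = 1}

/-- Two special rim hook `G`-tabloids have the same head: the same cells of the head
are occupied by the same vertices, and the rim hook structure restricted to the head
agrees. -/
def SameHead {V : Type*} {G : SimpleGraph V} {r : V → V → Prop} {N : ℕ}
    {lam : Nat.Partition N} (T T' : SRHGTabloid G r lam) : Prop :=
  (∀ v, T.pos v ∈ headCells lam ↔ T'.pos v ∈ headCells lam) ∧
  (∀ v, T.pos v ∈ headCells lam → T.pos v = T'.pos v) ∧
  (∀ u v, T.pos u ∈ headCells lam → T.pos v ∈ headCells lam →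
    (T.hk u = T.hk v ↔ T'.hk u = T'.hk v))

/-- `f(C,D) = [s_{(2^C,1^D)}] X_{GN_{C+D,C}}`. -/
noncomputable def fCD (C D : ℕ) : ℚ :=
  sCoeff (XCoeff (genNet (C + D) C)) (twoOne C D)

/-!
By the bialternant formula `a_δ s_λ = a_{λ+δ}` in `n` variables, whose two sides obey the same
branching rule in the last variable, `[s_λ] F` is the coefficient of `x^{λ+δ}` in `a_δ F`.

The body of the net `GN_{n,C}`, with `n = C + D`, is coloured from `n` colours by a permutation `π`,
and the pendant at the anchor `j` contributes `e₁ - x_{π j}`. Expanding the product and averaging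
over `π` gives `e_n ∑_r (-1)^r (C choose r) r! (n-r)! e₁^{C-r} e_r`. For a one-column shape,
multiplying an alternating polynomial by `e_r` only strips `r` cells (the dual Pieri rule), so each
`e₁^{C-r} e_r` contributes the coefficient of `x^δ` in `a_δ`, namely `1`. Hence
`f(C,D) = ∑_r (-1)^r (C choose r) r! (C+D-r)!`, and since
`(m choose i) (m-i choose r) = (m choose r) (m-r choose i)`, the recursion reduces to alternating
sums of binomial coefficients.
-/
section Alternants

variable {R : Type*} [CommRing R] {n : ℕ}

/-- The staircase `δ = (n-1, …, 1, 0)` added to a shape with `n` rows. -/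
def addStaircase (ν : Fin n → ℕ) (j : Fin n) : ℕ := ν j + j.rev

/-- The alternant `a_α = det (x_i ^ α_j)`. -/
def alternant (x : Fin n → R) (α : Fin n → ℕ) : R :=
  (Matrix.of fun i j => x i ^ α j).det

theorem addStaircase_strictAnti {ν : Fin n → ℕ} (hν : Antitone ν) :
    StrictAnti (addStaircase ν) := fun _ _ hij =>
  add_lt_add_of_le_of_lt (hν hij.le) (Fin.rev_lt_rev.2 hij)

theorem addStaircase_injective : Function.Injective (addStaircase (n := n)) := fun _ _ h =>
  funext fun j => Nat.add_right_cancel (congrFun h j)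

theorem alternant_comp_perm (x : Fin n → R) (α : Fin n → ℕ) (σ : Equiv.Perm (Fin n)) :
    alternant (x ∘ σ) α = Equiv.Perm.sign σ * alternant x α :=
  Matrix.det_permute σ (Matrix.of fun i j => x i ^ α j)

theorem map_alternant {S : Type*} [CommRing S] (φ : R →+* S) (x : Fin n → R) (α : Fin n → ℕ) :
    φ (alternant x α) = alternant (φ ∘ x) α := by
  simp only [alternant, RingHom.map_det]
  congr 1
  ext i j
  simp

theorem det_column_sum {ι κ : Type*} [Fintype ι] [DecidableEq ι] (S : ι → Finset κ)
    (f : ι → ι → κ → R) :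
    (Matrix.of fun i j => ∑ s ∈ S j, f i j s).det =
      ∑ σ ∈ Fintype.piFinset S, (Matrix.of fun i j => f i j (σ j)).det := by
  have := (Matrix.detRowAlternating (R := R) (n := ι)).toMultilinearMap.map_sum_finset
    (fun j s i => f i j s) S
  simp only [← Matrix.det_transpose (Matrix.of _)]
  convert this using 1
  · exact congrArg _ (Matrix.ext fun i j => by simp)
  · rfl

theorem pow_sub_pow_mul_pow (a b : R) {k l : ℕ} (h : l ≤ k) (m : ℕ) :
    a ^ (k + (m + 1)) - b ^ (k + 1 - l) * a ^ (l + m) =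
      (a - b) * ∑ s ∈ Finset.Icc l k, b ^ (k - s) * a ^ (s + m) := by
  obtain ⟨d, rfl⟩ := Nat.exists_eq_add_of_le h
  have hsum : ∑ s ∈ Finset.Icc l (l + d), b ^ (l + d - s) * a ^ (s + m) =
      (∑ t ∈ Finset.range (d + 1), a ^ t * b ^ (d + 1 - 1 - t)) * a ^ (l + m) := by
    rw [Finset.range_eq_Ico, Finset.sum_mul, ← Finset.Ico_add_one_right_eq_Icc, add_assoc,
      Finset.sum_Ico_eq_sum_range, Finset.range_eq_Ico]
    refine Finset.sum_congr (by simp) fun t _ => ?_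
    rw [Nat.add_sub_add_left]
    simp only [add_tsub_cancel_right]
    ring
  rw [hsum, ← mul_assoc, mul_comm (a - b), (Commute.all a b).geom_sum₂_mul,
    show l + d + 1 - l = d + 1 by omega]
  ring

/-- The shapes `σ` with `n` rows such that `ν / σ` is a horizontal strip. -/
def interlacing (ν : Fin (n + 1) → ℕ) : Finset (Fin n → ℕ) :=
  Fintype.piFinset fun j => Finset.Icc (ν j.succ) (ν j.castSucc)

theorem antitone_of_mem_interlacing {ν : Fin (n + 1) → ℕ} {σ : Fin n → ℕ}
    (h : σ ∈ interlacing ν) : Antitone σ := by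
  simp only [interlacing, Fintype.mem_piFinset, Finset.mem_Icc] at h
  cases n with
  | zero => exact fun i => i.elim0
  | succ n =>
    refine Fin.antitone_iff_succ_le.2 fun i => (h i.succ).2.trans ?_
    exact (h i.castSucc).1

theorem sum_sub_sum_of_mem_interlacing {ν : Fin (n + 1) → ℕ} {σ : Fin n → ℕ}
    (h : σ ∈ interlacing ν) :
    ∑ j, ν j - ∑ j, σ j = ∑ j : Fin n, (ν j.castSucc - σ j) + ν (Fin.last n) := by
  simp only [interlacing, Fintype.mem_piFinset, Finset.mem_Icc] at h
  have := Finset.sum_le_sum fun i (_ : i ∈ Finset.univ) => (h i).2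
  rw [Fin.sum_univ_castSucc, Finset.sum_tsub_distrib _ fun j _ => (h j).2]
  omega

theorem alternant_addStaircase_eq_det_rev (x : Fin n → R) (ν : Fin n → ℕ) :
    alternant x (addStaircase ν) = (Matrix.of fun i j : Fin n => x i.rev ^ (ν j.rev + j)).det := by
  rw [alternant, ← Matrix.det_submatrix_equiv_self Fin.revPerm]
  congr 1
  ext i j
  simp only [addStaircase, Matrix.submatrix_apply, Matrix.of_apply, Fin.revPerm_apply,
    Fin.rev_rev]

theorem alternant_eq_mul_det (x : Fin (n + 1) → R) {ν : Fin (n + 1) → ℕ} (hν : Antitone ν) :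
    alternant x (addStaircase ν) = x (Fin.last n) ^ ν (Fin.last n) *
      (Matrix.of fun i j : Fin n => x i.castSucc ^ (ν j.castSucc + (j.rev + 1)) -
        x (Fin.last n) ^ (ν j.castSucc + 1 - ν j.succ) *
          x i.castSucc ^ (ν j.succ + j.rev)).det := by
  -- Subtracting from each column a multiple of the next one clears the row of the last variable,
  -- except for its last entry. In reversed order this is a recursion on preceding columns.
  set y := x (Fin.last n) with hy
  set M : Matrix (Fin n) (Fin n) R := Matrix.of fun i j =>
    x i.castSucc ^ (ν j.castSucc + (j.rev + 1)) -
      y ^ (ν j.castSucc + 1 - ν j.succ) * x i.castSucc ^ (ν j.succ + j.rev)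
  let c : Fin n → R := fun j => y ^ (ν j.rev.castSucc + 1 - ν j.rev.succ)
  let A : Matrix (Fin (n + 1)) (Fin (n + 1)) R :=
    Matrix.of fun i j => x i.rev ^ (ν j.rev + j)
  let B : Matrix (Fin (n + 1)) (Fin (n + 1)) R := Matrix.of fun i =>
    Fin.cons (A i 0) fun j => A i j.succ - c j * A i j.castSucc
  have hAB : A.det = B.det := Matrix.det_eq_of_forall_col_eq_smul_add_pred c
    (fun i => by simp [B]) fun i j => by simp [B]
  have hrow : ∀ j : Fin n, B 0 j.succ = 0 := fun j => by
    have := hν (Fin.castSucc_lt_succ (i := j.rev)).le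
    simp only [B, A, c, Matrix.of_apply, Fin.cons_succ, Fin.rev_zero, Fin.rev_succ,
      Fin.rev_castSucc, Fin.val_succ, Fin.val_castSucc, ← pow_add, y]
    rw [sub_eq_zero]
    congr 1
    omega
  have hminor : (B.submatrix Fin.succ Fin.succ).det = M.det := by
    rw [← Matrix.det_submatrix_equiv_self Fin.revPerm M]
    congr 1
    ext i j
    simp only [B, A, M, c, Fin.rev_succ, Fin.rev_castSucc, Matrix.submatrix_apply,
      Matrix.of_apply, Fin.revPerm_apply, Fin.rev_rev, Fin.cons_succ, Fin.val_succ,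
      Fin.val_castSucc]
  have hB : B 0 0 = y ^ ν (Fin.last n) := by
    simp only [B, A, Matrix.of_apply, Fin.cons_zero, Fin.rev_zero, Fin.val_zero, add_zero, hy]
  calc alternant x (addStaircase ν) = B.det := (alternant_addStaircase_eq_det_rev x ν).trans hAB
    _ = y ^ ν (Fin.last n) * M.det := by
      rw [Matrix.det_succ_row_zero, Fin.sum_univ_succ, Finset.sum_eq_zero fun j _ => by
        rw [hrow, mul_zero, zero_mul], Fin.succAbove_zero, hminor, hB, Fin.val_zero, pow_zero,
        one_mul, add_zero]

theorem alternant_succ (x : Fin (n + 1) → R) {ν : Fin (n + 1) → ℕ} (hν : Antitone ν) :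
    alternant x (addStaircase ν) = (∏ i : Fin n, (x i.castSucc - x (Fin.last n))) *
      ∑ σ ∈ interlacing ν, x (Fin.last n) ^ (∑ j, ν j - ∑ j, σ j) *
        alternant (x ∘ Fin.castSucc) (addStaircase σ) := by
  simp only [alternant_eq_mul_det x hν, pow_sub_pow_mul_pow _ _ (hν (Fin.castSucc_lt_succ).le)]
  have hcol := Matrix.det_mul_column (fun i : Fin n => x i.castSucc - x (Fin.last n))
    (Matrix.of fun i j => ∑ s ∈ Finset.Icc (ν j.succ) (ν j.castSucc),
      x (Fin.last n) ^ (ν j.castSucc - s) * x i.castSucc ^ (s + j.rev))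
  simp only [Matrix.of_apply] at hcol
  rw [hcol, det_column_sum, mul_left_comm, Finset.mul_sum]
  congr 1
  refine Finset.sum_congr rfl fun σ hσ => ?_
  have hrow := Matrix.det_mul_row (fun j : Fin n => x (Fin.last n) ^ (ν j.castSucc - σ j))
    (Matrix.of fun i j => x i.castSucc ^ (σ j + j.rev))
  simp only [Matrix.of_apply] at hrow
  rw [hrow, ← mul_assoc, Finset.prod_pow_eq_pow_sum, ← pow_add, sum_sub_sum_of_mem_interlacing hσ,
    add_comm]
  rfl

theorem alternant_staircase_succ (x : Fin (n + 1) → R) :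
    alternant x (addStaircase 0) = (∏ i : Fin n, (x i.castSucc - x (Fin.last n))) *
      alternant (x ∘ Fin.castSucc) (addStaircase 0) := by
  have : interlacing (0 : Fin (n + 1) → ℕ) = {0} := by ext; simp [interlacing, funext_iff]
  simp [alternant_succ x (ν := 0) antitone_const, this]

end Alternants

section Coefficients

variable {R : Type*} [CommRing R] {n : ℕ}

/-- The coefficient of `∏ i, X i ^ β i`, with the exponents given as a function. -/
noncomputable def coeffAt (β : Fin n → ℕ) : MvPolynomial (Fin n) R →ₗ[R] R :=
  MvPolynomial.lcoeff R (Finsupp.equivFunOnFinite.symm β)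

theorem prod_X_pow_eq (γ : Fin n → ℕ) :
    (∏ i, MvPolynomial.X i ^ γ i : MvPolynomial (Fin n) R) =
      MvPolynomial.monomial (Finsupp.equivFunOnFinite.symm γ) 1 := by
  rw [MvPolynomial.monomial_eq, Finsupp.prod_fintype _ _ fun i => pow_zero _, map_one, one_mul]
  rfl

theorem coeffAt_prod_X_pow (β γ : Fin n → ℕ) :
    coeffAt β (∏ i, MvPolynomial.X i ^ γ i : MvPolynomial (Fin n) R) = if γ = β then 1 else 0 := by
  simp [coeffAt, prod_X_pow_eq, MvPolynomial.coeff_monomial]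

theorem coeffAt_prod_X_pow_mul (β γ : Fin n → ℕ) (p : MvPolynomial (Fin n) R) :
    coeffAt β ((∏ i, MvPolynomial.X i ^ γ i) * p) = if γ ≤ β then coeffAt (β - γ) p else 0 := by
  have hsub : Finsupp.equivFunOnFinite.symm β - Finsupp.equivFunOnFinite.symm γ =
    Finsupp.equivFunOnFinite.symm (β - γ) := by ext; simp
  rw [prod_X_pow_eq, coeffAt, MvPolynomial.lcoeff_apply, MvPolynomial.coeff_monomial_mul', hsub,
    one_mul]
  exact if_congr Iff.rfl rfl rfl

theorem coeffAt_prod_X_mul (β : Fin n → ℕ) (p : MvPolynomial (Fin n) R) :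
    coeffAt (β + 1) ((∏ i, MvPolynomial.X i) * p) = coeffAt β p := by
  have := coeffAt_prod_X_pow_mul (β + 1) 1 p
  rw [if_pos le_add_self, add_tsub_cancel_right] at this
  simpa using this

theorem coeffAt_rename (β : Fin n → ℕ) (σ : Equiv.Perm (Fin n)) (p : MvPolynomial (Fin n) R) :
    coeffAt β (MvPolynomial.rename σ p) = coeffAt (β ∘ σ) p := by
  have : Finsupp.equivFunOnFinite.symm β =
      (Finsupp.equivFunOnFinite.symm (β ∘ σ)).mapDomain σ := by
    ext i
    rw [← σ.apply_symm_apply i, Finsupp.mapDomain_apply σ.injective]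
    simp
  simp only [coeffAt, MvPolynomial.lcoeff_apply]
  rw [this, MvPolynomial.coeff_rename_mapDomain _ σ.injective]

theorem coeffAt_injective {p q : MvPolynomial (Fin n) R} (h : ∀ β, coeffAt β p = coeffAt β q) :
    p = q := MvPolynomial.ext _ _ fun m => by
  simpa [coeffAt] using h m

theorem coeffAt_alternant {α β : Fin n → ℕ} (hα : StrictAnti α) (hβ : StrictAnti β) :
    coeffAt β (alternant (MvPolynomial.X (R := R)) α) = if α = β then 1 else 0 := by
  have hσ (σ : Equiv.Perm (Fin n)) : α ∘ σ.symm = β ↔ σ = 1 ∧ α = β := by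
    refine ⟨fun h => ?_, fun ⟨hσ, h⟩ => hσ ▸ h⟩
    have hαβ : α = β := (hα.range_inj hβ).1 (by rw [← h, σ.symm.surjective.range_comp])
    refine ⟨Equiv.symm_bijective.injective (Equiv.ext fun i => hα.injective ?_), hαβ⟩
    exact (congrFun h i).trans (congrFun hαβ i).symm
  have hterm (σ : Equiv.Perm (Fin n)) :
      coeffAt β (∏ i, (MvPolynomial.X (σ i) ^ α i : MvPolynomial (Fin n) R)) =
        if σ = 1 ∧ α = β then 1 else 0 := by
    rw [← if_congr (hσ σ) rfl rfl, ← coeffAt_prod_X_pow β (α ∘ σ.symm),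
      ← Equiv.prod_comp σ fun i => MvPolynomial.X i ^ (α ∘ σ.symm) i]
    simp only [Function.comp_apply, Equiv.symm_apply_apply]
  simp only [alternant, Matrix.det_apply, Matrix.of_apply, map_sum, Units.smul_def, map_zsmul,
    hterm, ite_and]
  rw [Finset.sum_eq_single 1 (fun σ _ h => by simp [h]) (by simp)]
  simp

theorem rename_alternant (σ : Equiv.Perm (Fin n)) (α : Fin n → ℕ) :
    MvPolynomial.rename σ (alternant (MvPolynomial.X (R := R)) α) =
      ((Equiv.Perm.sign σ : ℤ) : MvPolynomial (Fin n) R) * alternant MvPolynomial.X α := by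
  rw [← alternant_comp_perm]
  let φ : MvPolynomial (Fin n) R →+* MvPolynomial (Fin n) R := (MvPolynomial.rename σ).toRingHom
  exact (map_alternant φ MvPolynomial.X α).trans
    (congrArg (alternant · α) (funext fun i => MvPolynomial.rename_X σ i))

theorem alternant_X_staircase_ne_zero [Nontrivial R] :
    alternant (MvPolynomial.X (σ := Fin n) (R := R)) (addStaircase 0) ≠ 0 := fun h => by
  have hδ := addStaircase_strictAnti (n := n) (ν := 0) antitone_const
  have := coeffAt_alternant (R := R) hδ hδ
  simp [h] at this

end Coefficients

section Tableaux

variable {R : Type*} [CommRing R] {n : ℕ}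

/-- The cells of the diagram with `n` rows of lengths `ν i`. -/
def cells (ν : Fin n → ℕ) : Finset Cell :=
  Finset.univ.biUnion fun i => (Finset.range (ν i)).image (Prod.mk (i : ℕ))

theorem mk_mem_cells {ν : Fin n → ℕ} {i : Fin n} {j : ℕ} : ((i : ℕ), j) ∈ cells ν ↔ j < ν i := by
  simp [cells, Fin.val_inj]

theorem mem_cells {ν : Fin n → ℕ} {c : Cell} :
    c ∈ cells ν ↔ ∃ h : c.1 < n, c.2 < ν ⟨c.1, h⟩ := by
  refine ⟨fun hc => ?_, fun ⟨h, hc⟩ => mk_mem_cells (i := ⟨c.1, h⟩).2 hc⟩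
  have hn : c.1 < n := by
    obtain ⟨i, -, hi⟩ := Finset.mem_biUnion.1 hc
    obtain ⟨j, -, rfl⟩ := Finset.mem_image.1 hi
    exact i.2
  exact ⟨hn, mk_mem_cells (i := ⟨c.1, hn⟩).1 hc⟩

theorem card_cells (ν : Fin n → ℕ) : (cells ν).card = ∑ i, ν i := by
  rw [cells, Finset.card_biUnion]
  · exact Finset.sum_congr rfl fun i _ => by
      rw [Finset.card_image_of_injective _ (Prod.mk_right_injective _), Finset.card_range]
  · intro i _ j _ hij
    simp only [Finset.disjoint_left, Finset.mem_image, not_exists]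
    rintro _ ⟨a, -, rfl⟩ b ⟨-, hb⟩
    exact hij (Fin.ext (Prod.ext_iff.1 hb).1.symm)

theorem cells_injective : Function.Injective (cells (n := n)) := fun ν σ h =>
  funext fun i => eq_of_forall_lt_iff fun j => by rw [← mk_mem_cells, h, mk_mem_cells]

theorem isLowerSet_cells {ν : Fin n → ℕ} (hν : Antitone ν) :
    IsLowerSet (cells ν : Set Cell) := fun c d hdc hc => by
  obtain ⟨h, hc⟩ := mem_cells.1 hc
  exact mem_cells.2 ⟨hdc.1.trans_lt h, (hdc.2.trans_lt hc).trans_le (hν hdc.1)⟩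

/-- Semistandard fillings. For a Young diagram, `Monotone` says that entries weakly increase
along rows and, redundantly, down columns. -/
def IsSemistandard {α : Type*} [Preorder α] {D : Finset Cell} (t : D → α) : Prop :=
  Monotone t ∧ ∀ c d : D, c.1.1 < d.1.1 → c.1.2 = d.1.2 → t c < t d

/-- The Schur polynomial of a diagram `D`, evaluated at `x`. -/
noncomputable def schurPoly (D : Finset Cell) (x : Fin n → R) : R :=
  ∑ t : D → Fin n with IsSemistandard t, ∏ c, x (t c)

theorem schurPoly_empty (x : Fin n → R) : schurPoly ∅ x = 1 := by
  have h : ∀ t : (∅ : Finset Cell) → Fin n, IsSemistandard t := fun t =>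
    ⟨Subsingleton.monotone t, fun c => absurd c.2 (Finset.notMem_empty _)⟩
  simp [schurPoly, h]

theorem IsSemistandard.row_le {D : Finset Cell} {t : D → Fin n} (ht : IsSemistandard t)
    (hD : IsLowerSet (D : Set Cell)) (c : D) : c.1.1 ≤ t c := by
  obtain ⟨⟨i, j⟩, hc⟩ := c
  induction i with
  | zero => exact Nat.zero_le _
  | succ i ih =>
    have hi : (i, j) ∈ D := hD (Prod.mk_le_mk.2 ⟨i.le_succ, le_rfl⟩) hc
    exact (ih hi).trans_lt (ht.2 ⟨_, hi⟩ ⟨_, hc⟩ i.lt_succ_self rfl)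

theorem schurPoly_eq_zero {D : Finset Cell} (hD : IsLowerSet (D : Set Cell)) {c : Cell}
    (hc : c ∈ D) (hn : n ≤ c.1) (x : Fin n → R) : schurPoly D x = 0 := by
  refine Finset.sum_eq_zero fun t ht => absurd ((Finset.mem_filter.1 ht).2.row_le hD ⟨c, hc⟩) ?_
  exact fun h => (hn.trans h).not_gt (t _).2

/-- The cells of a filling by `Fin (n + 1)` whose entry is not the largest possible one. -/
noncomputable def belowLast {D : Finset Cell} (t : D → Fin (n + 1)) : Finset Cell :=
  D.filter fun c => ∃ h : c ∈ D, t ⟨c, h⟩ ≠ Fin.last n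

theorem mem_belowLast {D : Finset Cell} {t : D → Fin (n + 1)} (c : D) :
    (c : Cell) ∈ belowLast t ↔ t c ≠ Fin.last n := by
  simp [belowLast]

theorem IsSemistandard.exists_interlacing {ν : Fin (n + 1) → ℕ} (hν : Antitone ν)
    {t : cells ν → Fin (n + 1)} (ht : IsSemistandard t) :
    ∃ σ ∈ interlacing ν, cells σ = belowLast t := by
  have hlower : IsLowerSet (belowLast t : Set Cell) := fun c d hdc hc => by
    obtain ⟨hcν, hlast⟩ := (Finset.mem_filter.1 hc).2
    have hd : d ∈ cells ν := isLowerSet_cells hν hdc hcν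
    have hle : t ⟨d, hd⟩ ≤ t ⟨c, hcν⟩ := ht.1 hdc
    exact (mem_belowLast ⟨d, hd⟩).2 (hle.trans_lt (Fin.lt_last_iff_ne_last.2 hlast)).ne
  let Y : YoungDiagram := ⟨belowLast t, hlower⟩
  have hY {i j : ℕ} : j < Y.rowLen i ↔ (i, j) ∈ belowLast t := YoungDiagram.mem_iff_lt_rowLen.symm
  refine ⟨fun i => Y.rowLen i, Fintype.mem_piFinset.2 fun i => Finset.mem_Icc.2
    ⟨le_of_forall_lt fun j hj => ?_, le_of_forall_lt fun j hj => ?_⟩, Finset.ext fun c => ?_⟩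
  · have hc : ((i.castSucc : ℕ), j) ∈ cells ν :=
      mk_mem_cells.2 (hj.trans_le (hν Fin.castSucc_lt_succ.le))
    have hlt := ht.2 ⟨_, hc⟩ ⟨_, mk_mem_cells.2 hj⟩ (Nat.lt_succ_self i) rfl
    exact hY.2 ((mem_belowLast ⟨_, hc⟩).2 (hlt.trans_le (Fin.le_last _)).ne)
  · exact mk_mem_cells.1 (Finset.mem_filter.1 (hY.1 hj)).1
  · refine mem_cells.trans ⟨fun ⟨_, hc⟩ => hY.1 hc, fun hc => ⟨?_, hY.2 hc⟩⟩
    obtain ⟨hcν, hlast⟩ := (Finset.mem_filter.1 hc).2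
    exact (ht.row_le (isLowerSet_cells hν) ⟨c, hcν⟩).trans_lt
      (Fin.lt_def.1 (Fin.lt_last_iff_ne_last.2 hlast))

/-- The filling of `D` that agrees with the filling `t` of `E` and has the largest possible entry
elsewhere. -/
noncomputable def extendLast {E : Finset Cell} (D : Finset Cell) (t : E → Fin n) (c : D) :
    Fin (n + 1) :=
  if h : (c : Cell) ∈ E then (t ⟨c, h⟩).castSucc else Fin.last n

section ExtendLast

variable {D E : Finset Cell}

theorem extendLast_inclusion (hE : E ⊆ D) (t : E → Fin n) (c : E) :
    extendLast D t ⟨c, hE c.2⟩ = (t c).castSucc := by simp [extendLast]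

theorem belowLast_extendLast (hE : E ⊆ D) (t : E → Fin n) : belowLast (extendLast D t) = E := by
  ext c
  by_cases hD : c ∈ D
  · rw [mem_belowLast ⟨c, hD⟩]
    by_cases hc : c ∈ E <;> simp [extendLast, hc]
  · exact iff_of_false (fun h => hD (Finset.mem_filter.1 h).1) fun h => hD (hE h)

theorem extendLast_injective (hE : E ⊆ D) :
    Function.Injective (extendLast (n := n) (E := E) D) :=
  fun s t h => funext fun c => Fin.castSucc_injective _ <| by
    rw [← extendLast_inclusion hE, h, extendLast_inclusion]

theorem exists_eq_extendLast {t : D → Fin (n + 1)} (ht : belowLast t = E) :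
    ∃ s : E → Fin n, extendLast D s = t := by
  subst ht
  have hE : belowLast t ⊆ D := Finset.filter_subset _ _
  refine ⟨fun c => (t ⟨c, hE c.2⟩).castPred ((mem_belowLast _).1 c.2), funext fun c => ?_⟩
  by_cases hc : (c : Cell) ∈ belowLast t
  · exact extendLast_inclusion hE _ ⟨c, hc⟩
  · rw [mem_belowLast, not_not] at hc
    simp [extendLast, mem_belowLast, hc]

theorem prod_extendLast (hE : E ⊆ D) (x : Fin (n + 1) → R) (t : E → Fin n) :
    ∏ c, x (extendLast D t c) =
      x (Fin.last n) ^ (D.card - E.card) * ∏ c, x (t c).castSucc := by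
  have hD := Finset.prod_coe_sort D fun c =>
    x (if h : c ∈ E then (t ⟨c, h⟩).castSucc else Fin.last n)
  have hEE := Finset.prod_coe_sort E fun c =>
    x (if h : c ∈ E then (t ⟨c, h⟩).castSucc else Fin.last n)
  simp only [Finset.coe_mem, dif_pos] at hEE
  rw [show ∏ c, x (extendLast D t c) = _ from hD, hEE, ← Finset.prod_sdiff hE,
    ← Finset.card_sdiff_of_subset hE, ← Finset.prod_const]
  congr 1
  exact Finset.prod_congr rfl fun c hc => by rw [dif_neg (Finset.mem_sdiff.1 hc).2]

end ExtendLast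

theorem cells_subset_of_mem_interlacing {ν : Fin (n + 1) → ℕ} {σ : Fin n → ℕ}
    (h : σ ∈ interlacing ν) : cells σ ⊆ cells ν := fun c hc => by
  obtain ⟨hn, hc⟩ := mem_cells.1 hc
  exact mem_cells.2 ⟨hn.trans n.lt_succ_self,
    hc.trans_le (Finset.mem_Icc.1 (Fintype.mem_piFinset.1 h ⟨c.1, hn⟩)).2⟩

theorem mem_cells_of_mem_interlacing {ν : Fin (n + 1) → ℕ} (hν : Antitone ν) {σ : Fin n → ℕ}
    (h : σ ∈ interlacing ν) {c d : Cell} (hd : d ∈ cells ν) (hrow : c.1 < d.1)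
    (hcol : c.2 = d.2) : c ∈ cells σ := by
  obtain ⟨hn, hd⟩ := mem_cells.1 hd
  have hc : c.1 < n := by omega
  refine mem_cells.2 ⟨hc, hcol ▸ hd.trans_le ((hν ?_).trans
    (Finset.mem_Icc.1 (Fintype.mem_piFinset.1 h ⟨c.1, hc⟩)).1)⟩
  exact Fin.mk_le_mk.2 hrow

theorem isSemistandard_extendLast {ν : Fin (n + 1) → ℕ} (hν : Antitone ν) {σ : Fin n → ℕ}
    (hσ : σ ∈ interlacing ν) (t : cells σ → Fin n) :
    IsSemistandard (extendLast (cells ν) t) ↔ IsSemistandard t := by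
  have hsub := cells_subset_of_mem_interlacing hσ
  have hlower := isLowerSet_cells (antitone_of_mem_interlacing hσ)
  constructor
  · refine fun ht => ⟨fun c d hcd => ?_, fun c d hrow hcol => ?_⟩
    · rw [← Fin.castSucc_le_castSucc_iff, ← extendLast_inclusion hsub, ← extendLast_inclusion hsub]
      exact ht.1 hcd
    · rw [← Fin.castSucc_lt_castSucc_iff, ← extendLast_inclusion hsub, ← extendLast_inclusion hsub]
      exact ht.2 _ _ hrow hcol
  · refine fun ht => ⟨fun c d hcd => ?_, fun c d hrow hcol => ?_⟩
    · by_cases hd : (d : Cell) ∈ cells σ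
      · have hc : (c : Cell) ∈ cells σ := hlower hcd hd
        simpa [extendLast, hc, hd] using ht.1 (show (⟨c, hc⟩ : cells σ) ≤ ⟨d, hd⟩ from hcd)
      · simp [extendLast, hd, Fin.le_last]
    · have hc : (c : Cell) ∈ cells σ := mem_cells_of_mem_interlacing hν hσ d.2 hrow hcol
      by_cases hd : (d : Cell) ∈ cells σ
      · simpa [extendLast, hc, hd] using ht.2 ⟨c, hc⟩ ⟨d, hd⟩ hrow hcol
      · simp [extendLast, hc, hd]

theorem schurPoly_succ (x : Fin (n + 1) → R) {ν : Fin (n + 1) → ℕ} (hν : Antitone ν) :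
    schurPoly (cells ν) x = ∑ σ ∈ interlacing ν, x (Fin.last n) ^ (∑ j, ν j - ∑ j, σ j) *
      schurPoly (cells σ) (x ∘ Fin.castSucc) := by
  have hmaps : ∀ t ∈ ({t | IsSemistandard t} : Finset (cells ν → Fin (n + 1))),
      belowLast t ∈ (interlacing ν).image cells := fun t ht =>
    Finset.mem_image.2 ((Finset.mem_filter.1 ht).2.exists_interlacing hν)
  rw [schurPoly, ← Finset.sum_fiberwise_of_maps_to hmaps, Finset.sum_image cells_injective.injOn]
  refine Finset.sum_congr rfl fun σ hσ => ?_
  have hsub := cells_subset_of_mem_interlacing hσ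
  rw [schurPoly, Finset.mul_sum]
  refine (Finset.sum_bij (fun t _ => extendLast (cells ν) t) (fun t ht => ?_)
    (fun s _ t _ h => extendLast_injective hsub h) (fun t ht => ?_) fun t _ => ?_).symm
  · simpa [belowLast_extendLast hsub, isSemistandard_extendLast hν hσ] using ht
  · simp only [Finset.mem_filter, Finset.mem_univ, true_and] at ht
    obtain ⟨s, rfl⟩ := exists_eq_extendLast ht.2
    exact ⟨s, by simpa using (isSemistandard_extendLast hν hσ s).1 ht.1, rfl⟩
  · rw [prod_extendLast hsub, card_cells, card_cells]
    rfl

theorem alternant_eq_mul_schurPoly : ∀ {n : ℕ} (x : Fin n → R) {ν : Fin n → ℕ}, Antitone ν →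
    alternant x (addStaircase ν) = alternant x (addStaircase 0) * schurPoly (cells ν) x
  | 0, x, ν, _ => by
    rw [show cells ν = ∅ from rfl, schurPoly_empty, alternant, alternant, Matrix.det_fin_zero,
      Matrix.det_fin_zero, one_mul]
  | n + 1, x, ν, hν => by
    rw [alternant_succ x hν, alternant_staircase_succ, schurPoly_succ x hν, mul_assoc]
    congr 1
    rw [Finset.mul_sum]
    refine Finset.sum_congr rfl fun σ hσ => ?_
    rw [alternant_eq_mul_schurPoly _ (antitone_of_mem_interlacing hσ), mul_left_comm]

end Tableaux

section Partitions

theorem lt_getD_iff_lt_countP {l : List ℕ} (hl : l.Pairwise (· ≥ ·)) (i j : ℕ) :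
    j < l.getD i 0 ↔ i < l.countP (j < ·) := by
  induction l generalizing i with
  | nil => simp
  | cons a l ih =>
    obtain ⟨ha, hl⟩ := List.pairwise_cons.1 hl
    by_cases haj : j < a
    · rw [List.countP_cons_of_pos (by simpa using haj)]
      cases i with
      | zero => simpa using haj
      | succ i => simpa using ih hl i
    · have h0 : l.countP (j < ·) = 0 := List.countP_eq_zero.2 fun b hb => by
        simpa using (ha b hb).trans (not_lt.1 haj)
      rw [List.countP_cons_of_neg (by simpa using haj), h0]
      cases i with
      | zero => simpa using haj
      | succ i => simpa [h0] using (ih hl i)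

variable {N : ℕ}

theorem lt_rowLen_iff (lam : Nat.Partition N) {i j : ℕ} :
    j < rowLen lam i ↔ i < lam.parts.countP (j < ·) := by
  have hl : ((lam.parts.sort (· ≤ ·)).reverse).Pairwise (· ≥ ·) :=
    List.pairwise_reverse.2 (Multiset.pairwise_sort _ _)
  rw [rowLen, lt_getD_iff_lt_countP hl, List.countP_reverse, ← Multiset.coe_countP,
    Multiset.sort_eq]

theorem rowLen_antitone (lam : Nat.Partition N) : Antitone (rowLen lam) := fun _ _ hik =>
  le_of_forall_lt fun _ hj => (lt_rowLen_iff lam).2 (hik.trans_lt ((lt_rowLen_iff lam).1 hj))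

theorem rowLen_pos_iff (lam : Nat.Partition N) {i : ℕ} :
    0 < rowLen lam i ↔ i < lam.parts.card := by
  rw [lt_rowLen_iff, Multiset.countP_eq_card.2 fun _ => lam.parts_pos]

theorem map_rowLen_range (lam : Nat.Partition N) :
    (Multiset.range lam.parts.card).map (rowLen lam) = lam.parts := by
  have hl (l : List ℕ) : (List.range l.length).map (fun i => l.getD i 0) = l :=
    List.ext_getElem (by simp) fun i _ _ => by simp_all
  have := hl (lam.parts.sort (· ≤ ·)).reverse
  rw [List.length_reverse, Multiset.length_sort] at this
  rw [← Multiset.coe_range, Multiset.map_coe]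
  exact (congrArg _ this).trans (by simp)

theorem rowLen_injective : Function.Injective (rowLen (N := N)) := fun lam κ h => by
  have hcard : lam.parts.card = κ.parts.card :=
    eq_of_forall_lt_iff fun i => by rw [← rowLen_pos_iff, ← rowLen_pos_iff, h]
  exact Nat.Partition.ext (by rw [← map_rowLen_range lam, ← map_rowLen_range κ, h, hcard])

theorem sum_range_rowLen (lam : Nat.Partition N) {n : ℕ} (hn : rowLen lam n = 0) :
    ∑ i ∈ Finset.range n, rowLen lam i = N := by
  have hcard : lam.parts.card ≤ n := not_lt.1 fun h => hn.not_gt ((rowLen_pos_iff lam).2 h)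
  rw [← Finset.sum_subset (Finset.range_mono hcard) fun i _ hi =>
    Nat.eq_zero_of_not_pos ((rowLen_pos_iff lam).not.2 (Finset.mem_range.not.1 hi))]
  exact (congrArg Multiset.sum (map_rowLen_range lam)).trans lam.parts_sum

theorem rowLen_self (lam : Nat.Partition N) : rowLen lam N = 0 := by
  refine Nat.eq_zero_of_not_pos ((rowLen_pos_iff lam).not.2 (not_lt.2 ?_))
  simpa [lam.parts_sum] using Multiset.card_nsmul_le_sum (a := 1) fun _ => lam.parts_pos

theorem rowLen_twoOne (C D i : ℕ) :
    rowLen (twoOne C D) i = (if i < C then 1 else 0) + if i < C + D then 1 else 0 := by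
  refine eq_of_forall_lt_iff fun j => ?_
  have : (twoOne C D).parts.countP (j < ·) =
      (if j < 2 then C else 0) + if j < 1 then D else 0 := by
    simp only [twoOne, Multiset.countP_add, ← Multiset.coe_replicate, Multiset.coe_countP,
      List.countP_replicate, decide_eq_true_eq]
  rw [lt_rowLen_iff, this]
  split_ifs <;> omega

theorem exists_partition_rowLen_eq {n : ℕ} {m : Fin n → ℕ} (hm : Antitone m) (hN : ∑ i, m i = N) :
    ∃ lam : Nat.Partition N, (∀ i : Fin n, rowLen lam i = m i) ∧ rowLen lam n = 0 := by
  let lam := Nat.Partition.ofSums N (Finset.univ.val.map m) hN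
  have hcount (j : ℕ) : lam.parts.countP (j < ·) = Finset.card {k | j < m k} := by
    rw [show lam.parts = _ from Nat.Partition.ofSums_parts .., Multiset.countP_filter,
      Multiset.countP_map]
    refine congrArg Multiset.card (Multiset.filter_congr fun k _ => ?_)
    exact and_iff_left_of_imp fun h => (j.zero_le.trans_lt h).ne'
  refine ⟨lam, fun i => eq_of_forall_lt_iff fun j => ?_, Nat.eq_zero_of_not_pos fun h => ?_⟩
  · rw [lt_rowLen_iff, hcount, Tuple.lt_card_gt_iff_apply_gt_of_antitone hm]
  · rw [lt_rowLen_iff, hcount] at h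
    exact h.not_ge ((Finset.card_le_univ _).trans_eq (Fintype.card_fin n))

end Partitions

section Fillings

variable {ι : Type*} {n : ℕ}

/-- The exponent vector in the variables `x_1, x_2, …` with entries `m 0, …, m (n-1), 0, 0, …`. -/
def pad (m : Fin n → ℕ) : ℕ → ℕ
  | 0 => 0
  | k + 1 => if h : k < n then m ⟨k, h⟩ else 0

theorem pad_succ (m : Fin n → ℕ) (i : Fin n) : pad m (i + 1) = m i := by simp [pad]

theorem exists_of_pad_ne_zero {m : Fin n → ℕ} {k : ℕ} (h : pad m k ≠ 0) :
    ∃ i : Fin n, (i : ℕ) + 1 = k := by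
  cases k with
  | zero => exact absurd rfl h
  | succ k =>
    by_cases hk : k < n
    · exact ⟨⟨k, hk⟩, rfl⟩
    · exact absurd (dif_neg hk) h

theorem eq_pad_iff {μ : ℕ → ℕ} {m : Fin n → ℕ} (hμ : ∀ k, μ k ≠ 0 → ∃ i : Fin n, (i : ℕ) + 1 = k) :
    μ = pad m ↔ ∀ i : Fin n, μ (i + 1) = m i := by
  refine ⟨fun h i => by rw [h, pad_succ], fun h => funext fun k => ?_⟩
  by_cases hk : ∃ i : Fin n, (i : ℕ) + 1 = k
  · obtain ⟨i, rfl⟩ := hk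
    rw [h, pad_succ]
  · rw [not_imp_comm.1 (hμ k) hk, not_imp_comm.1 exists_of_pad_ne_zero hk]

/-- The number of maps `ι → ℕ` with property `P` taking each value `k` exactly `μ k` times. -/
noncomputable def fillingCount (P : (ι → ℕ) → Prop) (μ : ℕ → ℕ) : ℕ :=
  Nat.card {f : ι → ℕ // P f ∧ ∀ k, Nat.card {v // f v = k} = μ k}

theorem exists_eq_pad_of_fillingCount_ne_zero [Fintype ι] {P : (ι → ℕ) → Prop}
    (hP : ∀ f, P f → ∀ v, 0 < f v) {μ : ℕ → ℕ} (h : fillingCount P μ ≠ 0) :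
    ∃ (n : ℕ) (m : Fin n → ℕ), μ = pad m ∧ ∑ i, m i = Fintype.card ι := by
  obtain ⟨⟨f, hf, hμ⟩⟩ := (Nat.card_ne_zero.1 h).1
  obtain ⟨n, hn⟩ : ∃ n, ∀ v, f v ≤ n := ⟨∑ v, f v, fun v =>
    Finset.single_le_sum (fun _ _ => Nat.zero_le _) (Finset.mem_univ v)⟩
  have hcolor (v : ι) : ∃ i : Fin n, (i : ℕ) + 1 = f v :=
    ⟨⟨f v - 1, by have := hP f hf v; have := hn v; omega⟩, Nat.sub_add_cancel (hP f hf v)⟩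
  choose g hg using hcolor
  refine ⟨n, fun i => μ (i + 1), (eq_pad_iff fun k hk => ?_).2 fun _ => rfl, ?_⟩
  · rw [← hμ] at hk
    obtain ⟨⟨v, rfl⟩⟩ := (Nat.card_ne_zero.1 hk).1
    exact ⟨g v, hg v⟩
  · simp_rw [← hμ, ← hg, Nat.add_right_cancel_iff, Fin.val_inj, Nat.card_eq_fintype_card,
      Fintype.card_subtype]
    exact (Finset.card_eq_sum_card_fiberwise fun _ _ => Finset.mem_univ _).symm

theorem forall_card_fiber_eq_pad_iff [Fintype ι] {g : ι → Fin n} {m : Fin n → ℕ} :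
    (∀ k, Nat.card {v // (g v : ℕ) + 1 = k} = pad m k) ↔
      ∀ i, Finset.card {v | g v = i} = m i := by
  rw [← funext_iff, eq_pad_iff fun k hk => ?_]
  · simp only [Nat.add_right_cancel_iff, Fin.val_inj, Nat.card_eq_fintype_card,
      Fintype.card_subtype]
  · obtain ⟨⟨v, hv⟩⟩ := (Nat.card_ne_zero.1 hk).1
    exact ⟨g v, hv⟩

theorem fillingCount_pad [Fintype ι] (P : (ι → ℕ) → Prop) (m : Fin n → ℕ) :
    fillingCount P (pad m) = Finset.card {g : ι → Fin n | P (fun v => g v + 1) ∧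
      ∀ i, Finset.card {v | g v = i} = m i} := by
  rw [← Fintype.card_subtype, ← Nat.card_eq_fintype_card]
  refine (Nat.card_eq_of_bijective
    (fun g => ⟨fun v => g.1 v + 1, g.2.1, forall_card_fiber_eq_pad_iff.2 g.2.2⟩)
    ⟨fun g g' h => Subtype.ext (funext fun v => Fin.ext ?_), fun ⟨f, hf, hm⟩ => ?_⟩).symm
  · exact Nat.add_right_cancel (congrFun (Subtype.ext_iff.1 h) v)
  · have hcolor (v : ι) : ∃ i : Fin n, (i : ℕ) + 1 = f v :=
      exists_of_pad_ne_zero <| by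
        rw [← hm]
        exact Nat.card_ne_zero.2 ⟨⟨v, rfl⟩, inferInstance⟩
    choose g hg using hcolor
    obtain rfl := funext hg
    exact ⟨⟨g, hf, forall_card_fiber_eq_pad_iff.1 hm⟩, rfl⟩

variable {R : Type*} [CommRing R]

/-- The generating polynomial of the maps `ι → ℕ` with property `P` and values in `{1, …, n}`. -/
noncomputable def fillingPoly [Fintype ι] (P : (ι → ℕ) → Prop) (x : Fin n → R) : R :=
  ∑ f : ι → Fin n with P fun v => f v + 1, ∏ v, x (f v)

theorem coeffAt_prod_X_comp [Fintype ι] (m : Fin n → ℕ) (f : ι → Fin n) :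
    coeffAt m (∏ v, (MvPolynomial.X (f v) : MvPolynomial (Fin n) R)) =
      if ∀ i, Finset.card {v | f v = i} = m i then 1 else 0 := by
  have hprod : ∏ v, (MvPolynomial.X (f v) : MvPolynomial (Fin n) R) =
      ∏ i, MvPolynomial.X i ^ Finset.card {v | f v = i} := by
    rw [← Finset.prod_fiberwise Finset.univ f]
    refine Finset.prod_congr rfl fun i _ => Finset.prod_eq_pow_card fun v hv => ?_
    rw [(Finset.mem_filter.1 hv).2]
  rw [hprod, coeffAt_prod_X_pow]
  exact if_congr funext_iff rfl rfl

theorem coeffAt_fillingPoly [Fintype ι] (P : (ι → ℕ) → Prop) (m : Fin n → ℕ) :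
    coeffAt m (fillingPoly P (MvPolynomial.X (R := R))) = fillingCount P (pad m) := by
  simp only [fillingPoly, map_sum, coeffAt_prod_X_comp, Finset.sum_boole, Finset.filter_filter,
    fillingCount_pad]

end Fillings

section SchurFunctions

variable {N n : ℕ}

/-- The first `n` row lengths of a partition. -/
def shape (lam : Nat.Partition N) (n : ℕ) (i : Fin n) : ℕ := rowLen lam i

theorem antitone_shape (lam : Nat.Partition N) (n : ℕ) : Antitone (shape lam n) := fun _ _ h =>
  rowLen_antitone lam h

theorem rowLen_eq_zero_of_le {lam : Nat.Partition N} (hn : rowLen lam n = 0) {k : ℕ}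
    (hk : n ≤ k) : rowLen lam k = 0 :=
  Nat.eq_zero_of_le_zero ((rowLen_antitone lam hk).trans_eq hn)

theorem shape_eq_shape_iff {lam κ : Nat.Partition N} (hlam : rowLen lam n = 0)
    (hκ : rowLen κ n = 0) : shape lam n = shape κ n ↔ lam = κ := by
  refine ⟨fun h => rowLen_injective (funext fun i => ?_), fun h => h ▸ rfl⟩
  rcases lt_or_ge i n with hi | hi
  · exact congrFun h ⟨i, hi⟩
  · rw [rowLen_eq_zero_of_le hlam hi, rowLen_eq_zero_of_le hκ hi]

theorem pad_shape_succ {lam : Nat.Partition N} (hn : rowLen lam n = 0) (k : ℕ) :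
    pad (shape lam n) (k + 1) = rowLen lam k := by
  rcases lt_or_ge k n with hk | hk
  · exact dif_pos hk
  · exact (dif_neg hk.not_gt).trans (rowLen_eq_zero_of_le hn hk).symm

theorem mem_cells_shape {lam : Nat.Partition N} (hn : rowLen lam n = 0) {c : Cell} :
    c ∈ cells (shape lam n) ↔ c ∈ diag lam := by
  refine mem_cells.trans ⟨fun ⟨_, hc⟩ => hc, fun hc => ⟨not_le.1 fun h => ?_, hc⟩⟩
  exact (Nat.zero_le c.2).not_gt ((rowLen_eq_zero_of_le hn h).symm ▸ hc)

/-- The diagram of a partition as a finite set. -/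
def diagram (lam : Nat.Partition N) : Finset Cell := cells (shape lam N)

theorem mem_diagram {lam : Nat.Partition N} {c : Cell} : c ∈ diagram lam ↔ c ∈ diag lam :=
  mem_cells_shape (rowLen_self lam)

theorem diagram_eq_cells {lam : Nat.Partition N} (hn : rowLen lam n = 0) :
    diagram lam = cells (shape lam n) :=
  Finset.ext fun _ => mem_diagram.trans (mem_cells_shape hn).symm

theorem card_diagram (lam : Nat.Partition N) : (diagram lam).card = N :=
  (card_cells _).trans ((Finset.sum_range _).symm.trans (sum_range_rowLen lam (rowLen_self lam)))

theorem isLowerSet_diagram (lam : Nat.Partition N) : IsLowerSet (diagram lam : Set Cell) :=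
  isLowerSet_cells (antitone_shape lam N)

/-- Semistandard fillings with positive entries. -/
def IsPositiveSemistandard {D : Finset Cell} (t : D → ℕ) : Prop :=
  (∀ c, 0 < t c) ∧ IsSemistandard t

theorem fillingPoly_isPositiveSemistandard {R : Type*} [CommRing R] (D : Finset Cell)
    (x : Fin n → R) :
    fillingPoly (ι := D) IsPositiveSemistandard x = schurPoly D x := by
  refine Finset.sum_congr (Finset.ext fun t => ?_) fun _ _ => rfl
  simp [IsPositiveSemistandard, IsSemistandard, Monotone]

theorem isSSYT_iff {lam : Nat.Partition N} {t : Cell → ℕ} :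
    IsSSYT lam t ↔ (∀ c, c ∉ diag lam → t c = 0) ∧
      IsPositiveSemistandard fun c : diagram lam => t c := by
  have hlower {c d : Cell} (hcd : c ≤ d) (hd : d ∈ diag lam) : c ∈ diag lam :=
    mem_diagram.1 (isLowerSet_diagram lam hcd (mem_diagram.2 hd))
  refine and_congr_right fun _ => ⟨fun ⟨hpos, hrow, hcol⟩ => ?_, fun ⟨hpos, hmono, hcol⟩ => ?_⟩
  · have hrow' {i j j' : ℕ} (hj : j ≤ j') : (i, j') ∈ diag lam → t (i, j) ≤ t (i, j') := by
      induction j', hj using Nat.le_induction with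
      | base => exact fun _ => le_rfl
      | succ k _ ih => exact fun h =>
          (ih (hlower (Prod.mk_le_mk.2 ⟨le_rfl, k.le_succ⟩) h)).trans (hrow i k h)
    have hcol' {i i' j : ℕ} (hi : i < i') : (i', j) ∈ diag lam → t (i, j) < t (i', j) := by
      induction i', hi using Nat.le_induction with
      | base => exact hcol i j
      | succ k _ ih => exact fun h =>
          (ih (hlower (Prod.mk_le_mk.2 ⟨k.le_succ, le_rfl⟩) h)).trans (hcol k j h)
    refine ⟨fun c => hpos _ (mem_diagram.1 c.2), fun ⟨⟨i, j⟩, _⟩ ⟨⟨i', j'⟩, hd⟩ hcd => ?_,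
      fun ⟨⟨i, j⟩, _⟩ ⟨⟨i', j'⟩, hd⟩ hi hj => ?_⟩
    · have hd := mem_diagram.1 hd
      refine (hrow' hcd.2 (hlower (Prod.mk_le_mk.2 ⟨hcd.1, le_rfl⟩) hd)).trans ?_
      exact hcd.1.eq_or_lt.elim (fun h => (congrArg (fun i => t (i, j')) h).le)
        fun h => (hcol' h hd).le
    · obtain rfl : j = j' := hj
      exact hcol' hi (mem_diagram.1 hd)
  · refine ⟨fun c hc => hpos ⟨c, mem_diagram.2 hc⟩, fun i j h => ?_, fun i j h => ?_⟩
    · have hle : (i, j) ≤ (i, j + 1) := Prod.mk_le_mk.2 ⟨le_rfl, j.le_succ⟩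
      exact hmono (a := ⟨_, mem_diagram.2 (hlower hle h)⟩) (b := ⟨_, mem_diagram.2 h⟩) hle
    · have hle : (i, j) ≤ (i + 1, j) := Prod.mk_le_mk.2 ⟨i.le_succ, le_rfl⟩
      exact hcol ⟨_, mem_diagram.2 (hlower hle h)⟩ ⟨_, mem_diagram.2 h⟩ i.lt_succ_self rfl

theorem schurFn_eq_fillingCount (lam : Nat.Partition N) (μ : ℕ → ℕ) :
    schurFn lam μ = fillingCount (ι := diagram lam) IsPositiveSemistandard μ := by
  have hcard (t : Cell → ℕ) (k : ℕ) : Nat.card {c : Cell // c ∈ diag lam ∧ t c = k} =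
      Nat.card {c : diagram lam // t c = k} := by
    simp only [← mem_diagram]
    exact (Nat.card_congr (Equiv.subtypeSubtypeEquivSubtypeInter _ fun c => t c = k)).symm
  refine congrArg Nat.cast (Nat.card_eq_of_bijective
    (fun t => ⟨fun c => t.1 c, (isSSYT_iff.1 t.2.1).2, fun k => (hcard t.1 k).symm.trans (t.2.2 k)⟩)
    ⟨fun t t' h => Subtype.ext (funext fun c => ?_), fun ⟨s, hs, hμ⟩ => ?_⟩)
  · by_cases hc : c ∈ diag lam
    · exact congrFun (Subtype.ext_iff.1 h) ⟨c, mem_diagram.2 hc⟩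
    · rw [t.2.1.1 c hc, t'.2.1.1 c hc]
  · let t : Cell → ℕ := fun c => if h : c ∈ diagram lam then s ⟨c, h⟩ else 0
    have ht : (fun c : diagram lam => t c) = s := funext fun c => dif_pos c.2
    have hsupp : ∀ c ∉ diag lam, t c = 0 := fun c hc => dif_neg (mem_diagram.not.2 hc)
    refine ⟨⟨t, isSSYT_iff.2 ⟨hsupp, by rwa [ht]⟩, fun k => ?_⟩, Subtype.ext ht⟩
    rw [hcard, ← hμ, ← ht]

theorem coeffAt_schurPoly_diagram (lam : Nat.Partition N) (m : Fin n → ℕ) :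
    coeffAt m (schurPoly (diagram lam) (MvPolynomial.X (R := ℚ))) = schurFn lam (pad m) := by
  rw [schurFn_eq_fillingCount, ← coeffAt_fillingPoly, fillingPoly_isPositiveSemistandard]

theorem schurPoly_diagram_eq_zero {lam : Nat.Partition N} (hn : rowLen lam n ≠ 0) {R : Type*}
    [CommRing R] (x : Fin n → R) : schurPoly (diagram lam) x = 0 :=
  schurPoly_eq_zero (isLowerSet_diagram lam)
    (mem_diagram.2 (show ((n, 0) : Cell) ∈ diag lam from Nat.pos_of_ne_zero hn)) le_rfl x

theorem coeffAt_alternant_mul_schurPoly {lam : Nat.Partition N} (hn : rowLen lam n = 0)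
    (κ : Nat.Partition N) :
    coeffAt (addStaircase (shape lam n)) (alternant MvPolynomial.X (addStaircase 0) *
      schurPoly (diagram κ) (MvPolynomial.X (R := ℚ))) = if κ = lam then 1 else 0 := by
  by_cases hκ : rowLen κ n = 0
  · rw [diagram_eq_cells hκ, ← alternant_eq_mul_schurPoly _ (antitone_shape κ n),
      coeffAt_alternant (addStaircase_strictAnti (antitone_shape κ n))
        (addStaircase_strictAnti (antitone_shape lam n))]
    exact if_congr (addStaircase_injective.eq_iff.trans (shape_eq_shape_iff hκ hn)) rfl rfl
  · rw [schurPoly_diagram_eq_zero hκ, mul_zero, map_zero, if_neg (by rintro rfl; exact hκ hn)]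

theorem isSymmetric_schurPoly_diagram (lam : Nat.Partition N) (n : ℕ) :
    (schurPoly (diagram lam) (MvPolynomial.X (σ := Fin n) (R := ℚ))).IsSymmetric := fun σ => by
  by_cases hn : rowLen lam n = 0
  · have hS := alternant_eq_mul_schurPoly (MvPolynomial.X (R := ℚ)) (antitone_shape lam n)
    rw [← diagram_eq_cells hn] at hS
    have hσ := congrArg (MvPolynomial.rename σ) hS
    rw [map_mul, rename_alternant, rename_alternant, mul_assoc, hS] at hσ
    have hsign : ((Equiv.Perm.sign σ : ℤ) : MvPolynomial (Fin n) ℚ) ≠ 0 := by simp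
    exact (mul_left_cancel₀ alternant_X_staircase_ne_zero (mul_left_cancel₀ hsign hσ)).symm
  · rw [schurPoly_diagram_eq_zero hn, map_zero]

/-- The homogeneous symmetric functions of degree `N`, recorded by their coefficients of monomials
in `x_1, x_2, …`. -/
def symmetricFunctions (N : ℕ) : Submodule ℚ ((ℕ → ℕ) → ℚ) where
  carrier := {F | (∀ μ, F μ ≠ 0 → ∃ (n : ℕ) (m : Fin n → ℕ), μ = pad m ∧ ∑ i, m i = N) ∧
    ∀ (n : ℕ) (m : Fin n → ℕ) (σ : Equiv.Perm (Fin n)), F (pad (m ∘ σ)) = F (pad m)}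
  zero_mem' := ⟨fun _ h => absurd rfl h, fun _ _ _ => rfl⟩
  add_mem' {F F'} hF hF' := by
    refine ⟨fun μ h => ?_, fun n m σ => congrArg₂ (· + ·) (hF.2 n m σ) (hF'.2 n m σ)⟩
    by_cases hμ : F μ = 0
    · exact hF'.1 μ fun hμ' => h (by rw [Pi.add_apply, hμ, hμ', add_zero])
    · exact hF.1 μ hμ
  smul_mem' a F hF :=
    ⟨fun μ h => hF.1 μ (right_ne_zero_of_mul h), fun n m σ => congrArg (a * ·) (hF.2 n m σ)⟩

theorem fillingCount_mem_symmetricFunctions {ι : Type*} [Fintype ι] {P : (ι → ℕ) → Prop}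
    (hpos : ∀ f, P f → ∀ v, 0 < f v)
    (hsymm : ∀ n, (fillingPoly P (MvPolynomial.X (σ := Fin n) (R := ℚ))).IsSymmetric) :
    (fun μ => (fillingCount P μ : ℚ)) ∈ symmetricFunctions (Fintype.card ι) := by
  refine ⟨fun μ h => exists_eq_pad_of_fillingCount_ne_zero hpos (Nat.cast_ne_zero.1 h),
    fun n m σ => ?_⟩
  simp only [← coeffAt_fillingPoly]
  rw [← coeffAt_rename, hsymm]

theorem schurFn_mem_symmetricFunctions (lam : Nat.Partition N) :
    schurFn lam ∈ symmetricFunctions N := by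
  have h := fillingCount_mem_symmetricFunctions (ι := diagram lam) (P := IsPositiveSemistandard)
    (fun _ hf => hf.1) fun n => by
      rw [fillingPoly_isPositiveSemistandard]
      exact isSymmetric_schurPoly_diagram lam n
  rw [Fintype.card_coe, card_diagram] at h
  rwa [funext (schurFn_eq_fillingCount lam)]

theorem eq_zero_of_mem_symmetricFunctions {F : (ℕ → ℕ) → ℚ} (hF : F ∈ symmetricFunctions N)
    (h : ∀ κ : Nat.Partition N, F (pad (shape κ N)) = 0) : F = 0 := by
  funext μ
  by_contra hμ
  obtain ⟨n, m, rfl, hm⟩ := hF.1 μ hμ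
  let σ := Tuple.sort (OrderDual.toDual ∘ m)
  have hanti : Antitone (m ∘ σ) := Tuple.monotone_sort (OrderDual.toDual ∘ m)
  obtain ⟨κ, hκ, hn⟩ := exists_partition_rowLen_eq hanti ((Equiv.sum_comp σ m).trans hm)
  have hpad : pad (shape κ N) = pad (shape κ n) := funext fun k => by
    cases k with
    | zero => rfl
    | succ k => rw [pad_shape_succ (rowLen_self κ), pad_shape_succ hn]
  rw [← hF.2 n m σ, ← funext hκ] at hμ
  exact hμ (hpad ▸ h κ)

theorem coeffAt_alternant_mul_of_eq_sum {F : (ℕ → ℕ) → ℚ} {c : Nat.Partition N → ℚ}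
    (hF : F = ∑ κ, c κ • schurFn κ) {p : MvPolynomial (Fin n) ℚ}
    (hp : ∀ m, coeffAt m p = F (pad m)) {lam : Nat.Partition N} (hn : rowLen lam n = 0) :
    coeffAt (addStaircase (shape lam n)) (alternant MvPolynomial.X (addStaircase 0) * p) =
      c lam := by
  have hsum : p = ∑ κ, c κ • schurPoly (diagram κ) MvPolynomial.X := coeffAt_injective fun m => by
    simp [hp, hF, coeffAt_schurPoly_diagram]
  simp [hsum, Finset.mul_sum, coeffAt_alternant_mul_schurPoly hn]

theorem exists_eq_sum_schurFn {F : (ℕ → ℕ) → ℚ} (hF : F ∈ symmetricFunctions N) :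
    ∃ c : Nat.Partition N → ℚ, F = ∑ κ, c κ • schurFn κ := by
  let expand : (Nat.Partition N → ℚ) →ₗ[ℚ] (ℕ → ℕ) → ℚ := Fintype.linearCombination ℚ schurFn
  let restrict : ((ℕ → ℕ) → ℚ) →ₗ[ℚ] Nat.Partition N → ℚ :=
    LinearMap.funLeft ℚ ℚ fun κ => pad (shape κ N)
  have hmem (c : Nat.Partition N → ℚ) : ∑ κ, c κ • schurFn κ ∈ symmetricFunctions N :=
    sum_mem fun κ _ => Submodule.smul_mem _ (c κ) (schurFn_mem_symmetricFunctions κ)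
  have hinj : Function.Injective (restrict ∘ₗ expand) := by
    refine (injective_iff_map_eq_zero _).2 fun c hc => funext fun lam => ?_
    have h0 : (0 : (ℕ → ℕ) → ℚ) = ∑ κ, c κ • schurFn κ :=
      (eq_zero_of_mem_symmetricFunctions (hmem c) (congrFun hc)).symm
    simpa using (coeffAt_alternant_mul_of_eq_sum (p := 0) h0 (by simp) (rowLen_self lam)).symm
  obtain ⟨c, hc⟩ := LinearMap.injective_iff_surjective.1 hinj (restrict F)
  refine ⟨c, sub_eq_zero.1 (eq_zero_of_mem_symmetricFunctions (sub_mem hF (hmem c)) fun κ => ?_)⟩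
  exact sub_eq_zero.2 (congrFun hc κ).symm

theorem sCoeff_eq_coeffAt {F : (ℕ → ℕ) → ℚ} (hF : F ∈ symmetricFunctions N)
    {p : MvPolynomial (Fin n) ℚ} (hp : ∀ m, coeffAt m p = F (pad m)) {lam : Nat.Partition N}
    (hn : rowLen lam n = 0) :
    sCoeff F lam = coeffAt (addStaircase (shape lam n))
      (alternant MvPolynomial.X (addStaircase 0) * p) := by
  have hsum (c : Nat.Partition N →₀ ℚ) :
      (∀ μ, F μ = c.sum fun ν a => a * schurFn ν μ) ↔ F = ∑ κ, c κ • schurFn κ := by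
    simp [funext_iff, Finsupp.sum_fintype]
  have hex : ∃ c : Nat.Partition N →₀ ℚ, ∀ μ, F μ = c.sum fun ν a => a * schurFn ν μ := by
    obtain ⟨c, hc⟩ := exists_eq_sum_schurFn hF
    exact ⟨Finsupp.equivFunOnFinite.symm c, (hsum _).2 (by simpa using hc)⟩
  rw [sCoeff, dif_pos hex]
  exact (coeffAt_alternant_mul_of_eq_sum ((hsum _).1 hex.choose_spec) hp hn).symm

end SchurFunctions

section Alternating

open MvPolynomial

variable {R : Type*} [CommRing R] {n : ℕ}

/-- Polynomials that change by the sign of each permutation of the variables. -/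
def IsAlternating (A : MvPolynomial (Fin n) R) : Prop :=
  ∀ σ : Equiv.Perm (Fin n),
    rename σ A = ((Equiv.Perm.sign σ : ℤ) : MvPolynomial (Fin n) R) * A

theorem IsAlternating.isSymmetric_mul {p A : MvPolynomial (Fin n) R} (hA : IsAlternating A)
    (hp : p.IsSymmetric) : IsAlternating (p * A) := fun σ => by
  rw [map_mul, hp, hA, mul_left_comm]

theorem isAlternating_alternant (α : Fin n → ℕ) :
    IsAlternating (alternant (X (R := R)) α) := fun σ => rename_alternant σ α

theorem exists_eq_addStaircase {γ : Fin n → ℕ} (hγ : StrictAnti γ) :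
    ∃ ν : Fin n → ℕ, Antitone ν ∧ γ = addStaircase ν := by
  refine ⟨fun j => γ j - j.rev, ?_, funext fun j => (Nat.sub_add_cancel ?_).symm⟩
  · cases n with
    | zero => exact fun i => i.elim0
    | succ n =>
      refine Fin.antitone_iff_succ_le.2 fun i => ?_
      have := hγ (Fin.castSucc_lt_succ (i := i))
      simp only [Fin.val_rev, Fin.val_succ, Fin.val_castSucc]
      omega
  · have hcard := Finset.card_le_card_of_injOn (s := Finset.Ioi j) (t := Finset.range (γ j)) γ
      (fun i hi => Finset.mem_coe.2 (Finset.mem_range.2 (hγ (Finset.mem_Ioi.1 hi))))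
      hγ.injective.injOn
    rw [Fin.card_Ioi, Finset.card_range] at hcard
    rw [Fin.val_rev]
    omega

/-- The shape `(1^k)` of a single column, for `k ≤ n`. -/
def column (n k : ℕ) (j : Fin n) : ℕ := if (j : ℕ) < k then 1 else 0

theorem sum_column {k : ℕ} (hk : k ≤ n) : ∑ j, column n k j = k := by
  simp [column, Finset.sum_boole, Fin.card_filter_val_lt, hk]

theorem antitone_column (n k : ℕ) : Antitone (column n k) := fun i j hij => by
  have : (i : ℕ) ≤ j := hij
  simp only [column]
  split_ifs <;> omega

theorem column_mono (n : ℕ) : Monotone (column n) := fun k l hkl j => by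
  simp only [column]
  split_ifs <;> omega

theorem addStaircase_column_tsub {c k : ℕ} (h : c ≤ k) :
    addStaircase (column n k) - (column n k - column n c) = addStaircase (column n c) :=
  funext fun j => by
    have : column n c j ≤ column n k j := column_mono n h j
    simp only [addStaircase, Pi.sub_apply]
    omega

theorem sum_column_tsub {c k : ℕ} (h : c ≤ k) (hk : k ≤ n) :
    ∑ j, (column n k - column n c) j = k - c := by
  simp only [Pi.sub_apply]
  rw [Finset.sum_tsub_distrib _ fun j _ => column_mono n h j, sum_column hk,
    sum_column (h.trans hk)]

theorem eq_column_sum {ν : Fin n → ℕ} (hν : Antitone ν) (h1 : ∀ j, ν j ≤ 1) :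
    ν = column n (∑ j, ν j) := by
  have hcard : ∑ j, ν j = Finset.card {j | 0 < ν j} := by
    rw [Finset.card_filter]
    refine Finset.sum_congr rfl fun j _ => ?_
    have := h1 j
    split_ifs <;> omega
  refine funext fun j => ?_
  have hj := Tuple.lt_card_gt_iff_apply_gt_of_antitone (j := j) (a := 0) hν
  rw [← hcard] at hj
  have := h1 j
  simp only [column, hj]
  split_ifs <;> omega

theorem prod_X_eq_prod_pow_indicator (T : Finset (Fin n)) :
    (∏ i ∈ T, X i : MvPolynomial (Fin n) R) = ∏ i, X i ^ if i ∈ T then 1 else 0 := by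
  simp [pow_ite, Finset.prod_ite_mem]

variable [NoZeroDivisors R] [CharZero R]

theorem IsAlternating.injective_of_coeffAt_ne_zero {A : MvPolynomial (Fin n) R}
    (hA : IsAlternating A) {β : Fin n → ℕ} (hβ : coeffAt β A ≠ 0) : Function.Injective β := by
  refine fun i j hij => by_contra fun hne => hβ ?_
  have hswap : β ∘ Equiv.swap i j = β := by
    rw [Equiv.comp_swap_eq_update, hij]
    simp [hij ▸ Function.update_eq_self i β]
  have hneg : coeffAt β A = -coeffAt β A := by
    conv_lhs => rw [← hswap, ← coeffAt_rename, hA, Equiv.Perm.sign_swap hne]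
    simp
  exact CharZero.eq_neg_self_iff.1 hneg

theorem eq_column_of_coeffAt_ne_zero {A : MvPolynomial (Fin n) R}
    (hA : IsAlternating A) {c r : ℕ} (hcr : c + r ≤ n) {γ : Fin n → ℕ} (hγ : ∀ i, γ i ≤ 1)
    (hsum : ∑ i, γ i = r) (hle : γ ≤ addStaircase (column n (c + r)))
    (hne : coeffAt (addStaircase (column n (c + r)) - γ) A ≠ 0) :
    γ = column n (c + r) - column n c := by
  set β := addStaircase (column n (c + r)) with hβ
  -- A 0-1 vector leaves `β` weakly decreasing, and alternation forbids repeated exponents.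
  have hanti : StrictAnti (β - γ) := by
    refine Antitone.strictAnti_of_injective (fun i j hij => ?_)
      (hA.injective_of_coeffAt_ne_zero hne)
    rcases hij.eq_or_lt with rfl | hij
    · rfl
    · have := addStaircase_strictAnti (antitone_column n (c + r)) hij
      have := hγ i
      simp only [Pi.sub_apply, ← hβ] at *
      omega
  obtain ⟨ν, hν, hβν⟩ := exists_eq_addStaircase hanti
  have hadd (i : Fin n) : ν i + γ i = column n (c + r) i := by
    have h1 := congrFun hβν i
    have h2 := hle i
    simp only [hβ, Pi.sub_apply, addStaircase] at h1 h2
    omega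
  have hνsum : ∑ i, ν i = c := by
    have := Finset.sum_congr rfl fun i (_ : i ∈ Finset.univ) => hadd i
    rw [Finset.sum_add_distrib, hsum, sum_column hcr] at this
    omega
  have hν1 (i : Fin n) : ν i ≤ 1 :=
    (Nat.le_add_right _ _).trans ((hadd i).trans_le (by unfold column; split_ifs <;> omega))
  funext i
  rw [Pi.sub_apply, ← hadd i, ← hνsum, ← eq_column_sum hν hν1, Nat.add_sub_cancel_left]

theorem IsAlternating.coeffAt_esymm_mul {A : MvPolynomial (Fin n) R}
    (hA : IsAlternating A) {c r : ℕ} (hcr : c + r ≤ n) :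
    coeffAt (addStaircase (column n (c + r))) (esymm (Fin n) R r * A) =
      coeffAt (addStaircase (column n c)) A := by
  have hsum {T : Finset (Fin n)} : ∑ i, (if i ∈ T then 1 else 0) = T.card := by simp
  set S : Finset (Fin n) := {i | c ≤ i ∧ i < c + r}
  have hS : (fun i => if i ∈ S then 1 else 0) = column n (c + r) - column n c := funext fun i => by
    simp only [S, Finset.mem_filter, Finset.mem_univ, true_and, Pi.sub_apply, column]
    split_ifs <;> omega
  have hScard : S.card = r := by
    rw [← hsum, hS, sum_column_tsub (Nat.le_add_right c r) hcr, Nat.add_sub_cancel_left]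
  rw [esymm, Finset.sum_mul, map_sum]
  simp only [prod_X_eq_prod_pow_indicator, coeffAt_prod_X_pow_mul]
  rw [Finset.sum_eq_single S]
  · have hfit : column n (c + r) - column n c ≤ addStaircase (column n (c + r)) :=
      fun i => (Nat.sub_le _ _).trans (Nat.le_add_right _ _)
    rw [hS, if_pos hfit, addStaircase_column_tsub (Nat.le_add_right c r)]
  · refine fun T hT hTS => ite_eq_right_iff.2 fun hfit => by_contra fun hne => hTS ?_
    have hTcol := eq_column_of_coeffAt_ne_zero hA hcr (fun i => by split_ifs <;> omega)
      (hsum.trans (Finset.mem_powersetCard.1 hT).2) hfit hne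
    ext i
    have := congrFun (hTcol.trans hS.symm) i
    split_ifs at this <;> simp_all
  · simp [hScard]

theorem coeffAt_esymm_one_pow_mul_esymm_mul_alternant {k r : ℕ} (h : k + r ≤ n) :
    coeffAt (addStaircase (column n (k + r)))
      (esymm (Fin n) R 1 ^ k * esymm (Fin n) R r * alternant X (addStaircase 0)) = 1 := by
  induction k with
  | zero =>
    have hδ := addStaircase_strictAnti (n := n) (ν := 0) antitone_const
    have hcol : column n 0 = 0 := funext fun i => if_neg (Nat.not_lt_zero _)
    rw [pow_zero, one_mul, (isAlternating_alternant _).coeffAt_esymm_mul h, hcol,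
      coeffAt_alternant hδ hδ, if_pos rfl]
  | succ k ih =>
    have hA : IsAlternating (esymm (Fin n) R 1 ^ k * esymm (Fin n) R r *
        alternant X (addStaircase 0)) :=
      (isAlternating_alternant _).isSymmetric_mul <|
        mul_mem (pow_mem (S := symmetricSubalgebra (Fin n) R) (esymm_isSymmetric _ _ _) k)
          (esymm_isSymmetric _ _ _)
    rw [Nat.add_right_comm, pow_succ', mul_assoc, mul_assoc, ← mul_assoc (_ ^ k),
      hA.coeffAt_esymm_mul (by omega), ih (by omega)]

end Alternating

section Averaging

theorem exists_perm_map_eq {ι : Type*} [Finite ι] {S T : Finset ι} (h : S.card = T.card) :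
    ∃ σ : Equiv.Perm ι, S.map σ.toEmbedding = T := by
  classical
  cases nonempty_fintype ι
  let e : {x // x ∈ S} ≃ {x // x ∈ T} := Finset.equivOfCardEq h
  refine ⟨e.extendSubtype, Finset.eq_of_subset_of_card_le (fun z hz => ?_) (by simp [h])⟩
  obtain ⟨x, hx, rfl⟩ := Finset.mem_map.1 hz
  exact e.extendSubtype_mem x hx

variable {R : Type*} {ι : Type*} [Fintype ι]

theorem sum_powersetCard_prod_comp_perm [CommSemiring R] (x : ι → R) (r : ℕ) (π : Equiv.Perm ι) :
    ∑ T ∈ Finset.univ.powersetCard r, ∏ i ∈ T, x (π i) =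
      ∑ T ∈ Finset.univ.powersetCard r, ∏ i ∈ T, x i := by
  conv_rhs => rw [← Finset.map_univ_equiv π, Finset.powersetCard_map, Finset.sum_map]
  simp

variable [DecidableEq ι]

theorem sum_perm_prod_eq_of_card_eq [CommSemiring R] (x : ι → R) {S T : Finset ι}
    (h : S.card = T.card) :
    ∑ π : Equiv.Perm ι, ∏ i ∈ S, x (π i) = ∑ π : Equiv.Perm ι, ∏ i ∈ T, x (π i) := by
  obtain ⟨σ, rfl⟩ := exists_perm_map_eq h
  rw [← Equiv.sum_comp (Equiv.mulRight σ)]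
  simp

theorem sum_perm_prod [CommRing R] [IsDomain R] [CharZero R] (x : ι → R) (S : Finset ι) :
    ∑ π : Equiv.Perm ι, ∏ i ∈ S, x (π i) =
      (S.card.factorial * (Fintype.card ι - S.card).factorial : ℕ) *
        ∑ T ∈ Finset.univ.powersetCard S.card, ∏ i ∈ T, x i := by
  have hchoose := Nat.choose_mul_factorial_mul_factorial (Finset.card_le_univ S)
  refine mul_left_cancel₀ (Nat.cast_ne_zero.2 (Nat.choose_pos (Finset.card_le_univ S)).ne') ?_
  calc ((Fintype.card ι).choose S.card : R) * ∑ π : Equiv.Perm ι, ∏ i ∈ S, x (π i)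
      = ∑ T ∈ Finset.univ.powersetCard S.card, ∑ π : Equiv.Perm ι, ∏ i ∈ T, x (π i) := by
        rw [Finset.sum_congr rfl fun T hT =>
          sum_perm_prod_eq_of_card_eq x (Finset.mem_powersetCard.1 hT).2, Finset.sum_const,
          Finset.card_powersetCard, Finset.card_univ, nsmul_eq_mul]
    _ = (Fintype.card ι).factorial * ∑ T ∈ Finset.univ.powersetCard S.card, ∏ i ∈ T, x i := by
        rw [Finset.sum_comm]
        simp only [sum_powersetCard_prod_comp_perm, Finset.sum_const, Finset.card_univ,
          Fintype.card_perm, nsmul_eq_mul]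
    _ = _ := by rw [← hchoose, mul_assoc, Nat.cast_mul, mul_assoc]

end Averaging

section Nets

variable {R : Type*} [CommRing R] {n m : ℕ}

theorem isProperColoring_genNet_iff (h : m ≤ n) {f : Fin n ⊕ Fin m → ℕ} :
    IsProperColoring (genNet n m) f ↔ (∀ v, 0 < f v) ∧ Function.Injective (f ∘ Sum.inl) ∧
      ∀ j, f (Sum.inr j) ≠ f (Sum.inl (Fin.castLE h j)) := by
  refine and_congr_right fun _ => ⟨fun hf => ⟨fun i j hij => ?_, fun j => ?_⟩, ?_⟩
  · by_contra hne
    exact hf (.inl i) (.inl j) (by simpa [genNet] using hne) hij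
  · exact hf _ _ (by simp [genNet])
  · rintro ⟨hinj, hpend⟩ (i | j) (i' | j') hadj
    · exact fun hij => hadj.ne (congrArg _ (hinj hij))
    · obtain rfl : i = Fin.castLE h j' := Fin.ext (by simpa [genNet] using hadj)
      exact (hpend j').symm
    · obtain rfl : i' = Fin.castLE h j := Fin.ext (by simpa [genNet] using hadj)
      exact hpend j
    · simp [genNet] at hadj

theorem prod_sum_sub_eq_sum_prod (x : Fin n → R) (a : Fin m → Fin n) :
    ∏ j, (∑ i, x i - x (a j)) =
      ∑ g ∈ Fintype.piFinset fun j => Finset.univ.erase (a j), ∏ j, x (g j) := by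
  rw [← Finset.prod_univ_sum]
  exact Finset.prod_congr rfl fun j _ => (Finset.sum_erase_eq_sub (Finset.mem_univ _)).symm

theorem fillingPoly_genNet (h : m ≤ n) (x : Fin n → R) :
    fillingPoly (IsProperColoring (genNet n m)) x =
      (∏ i, x i) * ∑ π : Equiv.Perm (Fin n), ∏ j, (∑ i, x i - x (π (Fin.castLE h j))) := by
  have hproper (f : Fin n ⊕ Fin m → Fin n) :
      IsProperColoring (genNet n m) (fun v => f v + 1) ↔ Function.Injective (f ∘ Sum.inl) ∧
        ∀ j, f (Sum.inr j) ≠ f (Sum.inl (Fin.castLE h j)) := by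
    simp [isProperColoring_genNet_iff h, Function.Injective, Fin.val_inj]
  rw [Finset.mul_sum]
  simp only [prod_sum_sub_eq_sum_prod, Finset.mul_sum, Finset.sum_sigma', fillingPoly, hproper]
  symm
  refine Finset.sum_bij (fun p _ => Sum.elim p.1 p.2) (fun p hp => ?_) (fun p _ q _ hpq => ?_)
    (fun f hf => ?_) fun p _ => ?_
  · simpa [p.1.injective] using hp
  · have hinl := funext fun i => congrFun hpq (Sum.inl i)
    have hinr := funext fun j => congrFun hpq (Sum.inr j)
    exact Sigma.ext (Equiv.coe_fn_injective hinl) (heq_of_eq hinr)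
  · obtain ⟨hinj, hpend⟩ := (Finset.mem_filter.1 hf).2
    refine ⟨⟨Equiv.ofBijective _ (Finite.injective_iff_bijective.1 hinj), f ∘ Sum.inr⟩, ?_,
      Sum.elim_comp_inl_inr f⟩
    simpa using hpend
  · rw [Fintype.prod_sum_type, ← Equiv.prod_comp p.1 x]
    rfl

theorem sum_perm_prod_sum_sub [IsDomain R] [CharZero R] (h : m ≤ n) (x : Fin n → R) :
    ∑ π : Equiv.Perm (Fin n), ∏ j, (∑ i, x i - x (π (Fin.castLE h j))) =
      ∑ r ∈ Finset.range (m + 1), ((-1) ^ r * m.choose r * r.factorial * (n - r).factorial : ℤ) •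
        ((∑ i, x i) ^ (m - r) * ∑ T ∈ Finset.univ.powersetCard r, ∏ i ∈ T, x i) := by
  let F (r : ℕ) : R := ((-1) ^ r * r.factorial * (n - r).factorial : ℤ) *
    ((∑ i, x i) ^ (m - r) * ∑ T ∈ Finset.univ.powersetCard r, ∏ i ∈ T, x i)
  calc _ = ∑ J ∈ (Finset.univ : Finset (Fin m)).powerset,
          (-1) ^ J.card * (∑ i, x i) ^ (m - J.card) *
            ∑ π : Equiv.Perm (Fin n), ∏ i ∈ J.map (Fin.castLEEmb h), x (π i) := by
        simp only [Finset.prod_sub, Finset.prod_const]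
        rw [Finset.sum_comm]
        simp [Finset.mul_sum, Finset.card_univ_sdiff]
    _ = ∑ J ∈ (Finset.univ : Finset (Fin m)).powerset, F J.card := by
        refine Finset.sum_congr rfl fun J _ => ?_
        rw [sum_perm_prod, Finset.card_map, Fintype.card_fin]
        simp only [F]
        push_cast
        ring
    _ = _ := by
        rw [Finset.sum_powerset_apply_card, Finset.card_univ, Fintype.card_fin]
        refine Finset.sum_congr rfl fun r _ => ?_
        simp only [F, nsmul_eq_mul, zsmul_eq_mul]
        push_cast
        ring

theorem isSymmetric_fillingPoly_isProperColoring {V : Type*} [Fintype V] (G : SimpleGraph V) :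
    (fillingPoly (IsProperColoring G)
      (MvPolynomial.X : Fin n → MvPolynomial (Fin n) R)).IsSymmetric := fun σ => by
  simp only [fillingPoly, map_sum, map_prod, MvPolynomial.rename_X]
  exact Finset.sum_equiv ((Equiv.refl V).arrowCongr σ)
    (fun f => by simp [IsProperColoring, Fin.val_inj]) fun f _ => by simp

theorem XCoeff_mem_symmetricFunctions {V : Type*} [Fintype V] (G : SimpleGraph V) :
    XCoeff G ∈ symmetricFunctions (Fintype.card V) :=
  fillingCount_mem_symmetricFunctions (fun _ hf => hf.1) fun _ =>
    isSymmetric_fillingPoly_isProperColoring G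

theorem addStaircase_shape_twoOne (C D : ℕ) :
    addStaircase (shape (twoOne C D) (C + D)) = addStaircase (column (C + D) C) + 1 :=
  funext fun i => by
    simp [addStaircase, shape, rowLen_twoOne, column, Nat.add_right_comm]

theorem fCD_eq_sum (C D : ℕ) :
    fCD C D = ∑ r ∈ Finset.range (C + 1),
      (-1 : ℚ) ^ r * C.choose r * r.factorial * (C + D - r).factorial := by
  have hmem : XCoeff (genNet (C + D) C) ∈ symmetricFunctions (2 * C + D) := by
    have hcard : Fintype.card (Fin (C + D) ⊕ Fin C) = 2 * C + D := by
      simp only [Fintype.card_sum, Fintype.card_fin]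
      omega
    exact hcard ▸ XCoeff_mem_symmetricFunctions _
  have hlen : rowLen (twoOne C D) (C + D) = 0 := by simp [rowLen_twoOne]
  rw [fCD, sCoeff_eq_coeffAt hmem (fun m => coeffAt_fillingPoly _ m) hlen,
    addStaircase_shape_twoOne, fillingPoly_genNet (Nat.le_add_right C D), mul_left_comm,
    coeffAt_prod_X_mul, mul_comm, sum_perm_prod_sum_sub, Finset.sum_mul, map_sum]
  refine Finset.sum_congr rfl fun r hr => ?_
  have hrC : C - r + r = C := Nat.sub_add_cancel (Finset.mem_range_succ_iff.1 hr)
  have hone := coeffAt_esymm_one_pow_mul_esymm_mul_alternant (n := C + D) (R := ℚ) (k := C - r)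
    (r := r) (by omega)
  rw [hrC, MvPolynomial.esymm_one] at hone
  rw [smul_mul_assoc, map_zsmul]
  refine (congrArg _ hone).trans ?_
  rw [zsmul_one]
  push_cast
  rfl

end Nets

section BinomialIdentities

theorem choose_mul_choose_sub (m i r : ℕ) :
    m.choose i * (m - i).choose r = m.choose r * (m - r).choose i := by
  have h (i r : ℕ) : m.choose (i + r) * (i + r).choose i = m.choose i * (m - i).choose r := by
    rw [Nat.choose_mul (Nat.le_add_right i r), Nat.add_sub_cancel_left]
  rw [← h, ← h, Nat.add_comm r i, Nat.choose_symm_add]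

theorem sum_Icc_neg_one_pow_mul_choose {R : Type*} [Ring R] {M m : ℕ} (h : M ≤ m) :
    ∑ i ∈ Finset.Icc 1 m, (-1 : R) ^ (i - 1) * M.choose i = if M = 0 then 0 else 1 := by
  have halt : ∑ i ∈ Finset.range (m + 1), (-1 : R) ^ i * M.choose i = if M = 0 then 1 else 0 := by
    rw [← Finset.sum_subset (Finset.range_mono (Nat.succ_le_succ h)) fun i _ hi => ?_]
    · exact_mod_cast congrArg (Int.cast : ℤ → R) (Int.alternating_sum_range_choose (n := M))
    · simp [Nat.choose_eq_zero_of_lt (not_lt.1 (Finset.mem_range.not.1 hi))]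
  rw [Finset.range_eq_Ico, Finset.sum_eq_sum_Ico_succ_bot m.succ_pos] at halt
  have hneg : ∑ i ∈ Finset.Ico (0 + 1) (m + 1), (-1 : R) ^ i * M.choose i =
      -∑ i ∈ Finset.Icc 1 m, (-1 : R) ^ (i - 1) * M.choose i := by
    rw [← Finset.sum_neg_distrib]
    refine Finset.sum_congr rfl fun i hi => ?_
    obtain ⟨k, rfl⟩ := Nat.exists_eq_add_of_le' (Finset.mem_Icc.1 hi).1
    simp [pow_succ]
  rw [hneg, pow_zero, Nat.choose_zero_right, Nat.cast_one, mul_one, ← sub_eq_add_neg] at halt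
  rw [← sub_sub_self 1 (∑ i ∈ _, _), halt]
  split_ifs <;> simp

theorem fCD_succ_zero (m : ℕ) :
    fCD (m + 1) 0 = (m + 1).factorial * ∑ r ∈ Finset.range m, (-1) ^ r := by
  have hcancel : ∑ r ∈ Finset.range m, (-1 : ℚ) ^ r = ∑ r ∈ Finset.range (m + 1 + 1), (-1) ^ r := by
    rw [Finset.sum_range_succ, Finset.sum_range_succ, pow_succ]
    ring
  rw [fCD_eq_sum, hcancel, Finset.mul_sum]
  refine Finset.sum_congr rfl fun r hr => ?_
  rw [add_zero, ← Nat.choose_mul_factorial_mul_factorial (Finset.mem_range_succ_iff.1 hr)]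
  push_cast
  ring

theorem choose_mul_fCD_sub {m i : ℕ} (hi : i ≤ m) :
    m.choose i * fCD (m - i) i =
      m.factorial * ∑ r ∈ Finset.range (m + 1), (-1 : ℚ) ^ r * (m - r).choose i := by
  rw [fCD_eq_sum, Nat.sub_add_cancel hi, Finset.mul_sum, Finset.mul_sum,
    Finset.sum_subset (Finset.range_mono (Nat.succ_le_succ (Nat.sub_le m i))) fun r _ hr => ?_]
  · refine Finset.sum_congr rfl fun r hr => ?_
    have hfact := Nat.choose_mul_factorial_mul_factorial (Finset.mem_range_succ_iff.1 hr)
    calc (m.choose i : ℚ) * ((-1) ^ r * (m - i).choose r * r.factorial * (m - r).factorial)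
        = (-1) ^ r * (m.choose i * (m - i).choose r : ℕ) * r.factorial * (m - r).factorial := by
          push_cast
          ring
      _ = m.factorial * ((-1) ^ r * (m - r).choose i) := by
          rw [choose_mul_choose_sub, ← hfact]
          push_cast
          ring
  · simp [Nat.choose_eq_zero_of_lt (not_lt.1 (Finset.mem_range.not.1 hr))]

theorem sum_Icc_choose_mul_fCD_sub (m : ℕ) :
    ∑ i ∈ Finset.Icc 1 m, m.choose i * (-1) ^ (i - 1) * fCD (m - i) i =
      m.factorial * ∑ r ∈ Finset.range m, (-1) ^ r := by
  calc ∑ i ∈ Finset.Icc 1 m, m.choose i * (-1) ^ (i - 1) * fCD (m - i) i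
      = ∑ i ∈ Finset.Icc 1 m, m.factorial *
          ∑ r ∈ Finset.range (m + 1), (-1 : ℚ) ^ r * ((-1) ^ (i - 1) * (m - r).choose i) := by
        refine Finset.sum_congr rfl fun i hi => ?_
        rw [mul_right_comm, choose_mul_fCD_sub (Finset.mem_Icc.1 hi).2, mul_assoc, Finset.sum_mul]
        simp only [mul_assoc, mul_comm ((-1 : ℚ) ^ (i - 1))]
    _ = m.factorial * ∑ r ∈ Finset.range (m + 1), (-1 : ℚ) ^ r * if m - r = 0 then 0 else 1 := by
        rw [← Finset.mul_sum, Finset.sum_comm]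
        simp only [← Finset.mul_sum, sum_Icc_neg_one_pow_mul_choose (Nat.sub_le m _)]
    _ = m.factorial * ∑ r ∈ Finset.range m, (-1) ^ r := by
        rw [Finset.sum_range_succ, Nat.sub_self, if_pos rfl, mul_zero, add_zero]
        congr 1
        refine Finset.sum_congr rfl fun r hr => ?_
        rw [if_neg (Nat.sub_ne_zero_of_lt (Finset.mem_range.1 hr)), mul_one]

end BinomialIdentities

/-- For `n ≥ 3`:
`f(n,0) = n · ∑_{i=1}^{n-1} (n-1 choose i) · (-1)^{i-1} · f(n-i-1, i)`. -/
theorem fCD_bottom_hook_removal (n : ℕ) (hn : 3 ≤ n) :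
    fCD n 0 = (n : ℚ) * ∑ i ∈ Finset.Icc 1 (n - 1),
      (((n - 1).choose i : ℕ) : ℚ) * (-1) ^ (i - 1) * fCD (n - i - 1) i := by
  obtain ⟨m, rfl⟩ := Nat.exists_eq_add_of_le' (show 1 ≤ n by omega)
  simp only [Nat.sub_sub, Nat.add_sub_add_right, Nat.add_sub_cancel]
  rw [fCD_succ_zero, sum_Icc_choose_mul_fCD_sub, Nat.factorial_succ, Nat.cast_mul, mul_assoc]
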